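/- Fix positive integers m, d and a similarity class type τ (a multiset of pairs (d_i, λ_i) where d_i is a positive integer and λ_i an integer partition) of size md. Then there exists a polynomial P with rational coefficients such that for every prime power q for which there exists a linear operator of similarity class type τ on an md-dimensional F_q-vector space, and for every such operator T, one has σ(m,d;T) = P(q). -/

import Mathlib

/-- `W` is an `m`-dimensional `T`-splitting subspace: `V = W ⊕ TW ⊕ ⋯ ⊕ T^{d-1}W`. -/
def IsSplittingSubspace {F V : Type*} [Field F] [AddCommGroup V] [Module F V]
    (T : V →ₗ[F] V) (m d : ℕ) (W : Submodule F V) : Prop :=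
  Module.finrank F W = m ∧
  iSupIndep (fun i : Fin d => W.map (T ^ (i : ℕ))) ∧
  (⨆ i : Fin d, W.map (T ^ (i : ℕ))) = ⊤

/-- `σ(m,d;T)`, the number of `m`-dimensional `T`-splitting subspaces. -/
noncomputable def splitCount {F V : Type*} [Field F] [AddCommGroup V] [Module F V]
    (T : V →ₗ[F] V) (m d : ℕ) : ℕ :=
  Set.ncard {W : Submodule F V | IsSplittingSubspace T m d W}

/-- `T` has similarity class type `τ`, where `τ` is a multiset of pairs
`(dᵢ, λᵢ)` with `dᵢ` the degree of a monic irreducible polynomial and `λᵢ` an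
integer partition (a multiset of positive parts).  This holds when there is a
finite set `s` of distinct monic irreducible polynomials and partitions `lam p`
for `p ∈ s` such that `τ` is the multiset of pairs `(deg p, lam p)`, every monic
irreducible polynomial outside `s` acts invertibly on `V` (no primary component),
and for `p ∈ s` the `p`-primary elementary divisors of `T` are given by `lam p`;
the latter is recorded by the (characterizing) kernel dimensions
`dim ker p(T)^j = deg p · Σ_{a ∈ lam p} min a j`. -/
def HasType {F V : Type*} [Field F] [AddCommGroup V] [Module F V]
    (τ : Multiset (ℕ × Multiset ℕ)) (T : V →ₗ[F] V) : Prop :=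
  ∃ (s : Finset (Polynomial F)) (lam : Polynomial F → Multiset ℕ),
    (∀ p ∈ s, p.Monic ∧ Irreducible p) ∧
    (∀ p ∈ s, ∀ a ∈ lam p, 0 < a) ∧
    τ = s.val.map (fun p => (p.natDegree, lam p)) ∧
    (∀ p ∈ s, ∀ j : ℕ,
      Module.finrank F ↥(LinearMap.ker (Polynomial.aeval T (p ^ j))) =
        p.natDegree * ((lam p).map (fun a => min a j)).sum) ∧
    (∀ p : Polynomial F, p.Monic → Irreducible p → p ∉ s →
      LinearMap.ker (Polynomial.aeval T p) = ⊥)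


structure KObj (F : Type) [Field F] where
  V : Type
  U : Type
  [acV : AddCommGroup V]
  [acU : AddCommGroup U]
  [mV : Module F V]
  [mU : Module F U]
  [fV : FiniteDimensional F V]
  [fU : FiniteDimensional F U]
  i : U →ₗ[F] V
  t : U →ₗ[F] V

attribute [instance] KObj.acV KObj.acU KObj.mV KObj.mU KObj.fV KObj.fU

@[ext] structure KHom {F : Type} [Field F] (M N : KObj F) where
  f1 : M.U →ₗ[F] N.U
  f0 : M.V →ₗ[F] N.V
  hi : ∀ u, f0 (M.i u) = N.i (f1 u)
  ht : ∀ u, f0 (M.t u) = N.t (f1 u)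

namespace KHom
variable {F : Type} [Field F]

def comp {M N K : KObj F} (g : KHom N K) (f : KHom M N) : KHom M K where
  f1 := g.f1 ∘ₗ f.f1
  f0 := g.f0 ∘ₗ f.f0
  hi u := by simp [f.hi, g.hi]
  ht u := by simp [f.ht, g.ht]

def id (M : KObj F) : KHom M M := ⟨LinearMap.id, LinearMap.id, fun _ => rfl, fun _ => rfl⟩

def zero (M N : KObj F) : KHom M N := ⟨0, 0, fun _ => by simp, fun _ => by simp⟩

def Inj {M N : KObj F} (g : KHom M N) : Prop := Function.Injective g.f1 ∧ Function.Injective g.f0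
def Surj {M N : KObj F} (g : KHom M N) : Prop := Function.Surjective g.f1 ∧ Function.Surjective g.f0
def Bij {M N : KObj F} (g : KHom M N) : Prop := Function.Bijective g.f1 ∧ Function.Bijective g.f0

theorem Bij.inj {M N : KObj F} {g : KHom M N} (h : g.Bij) : g.Inj := ⟨h.1.1, h.2.1⟩
theorem Bij.surj {M N : KObj F} {g : KHom M N} (h : g.Bij) : g.Surj := ⟨h.1.2, h.2.2⟩
theorem bij_of {M N : KObj F} {g : KHom M N} (h : g.Inj) (h' : g.Surj) : g.Bij :=
  ⟨⟨h.1, h'.1⟩, ⟨h.2, h'.2⟩⟩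

noncomputable def inv {M N : KObj F} (g : KHom M N) (h : g.Bij) : KHom N M where
  f1 := (LinearEquiv.ofBijective g.f1 h.1).symm
  f0 := (LinearEquiv.ofBijective g.f0 h.2).symm
  hi u := by
    obtain ⟨x, rfl⟩ := h.1.2 u
    rw [← g.hi]
    have h1 := (LinearEquiv.ofBijective g.f1 h.1).symm_apply_apply x
    have h2 := (LinearEquiv.ofBijective g.f0 h.2).symm_apply_apply (M.i x)
    simp only [LinearEquiv.ofBijective_apply] at h1 h2
    simp [h1, h2]
  ht u := by
    obtain ⟨x, rfl⟩ := h.1.2 u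
    rw [← g.ht]
    have h1 := (LinearEquiv.ofBijective g.f1 h.1).symm_apply_apply x
    have h2 := (LinearEquiv.ofBijective g.f0 h.2).symm_apply_apply (M.t x)
    simp only [LinearEquiv.ofBijective_apply] at h1 h2
    simp [h1, h2]

theorem inv_comp {M N : KObj F} (g : KHom M N) (h : g.Bij) : (g.inv h).comp g = id M := by
  ext x
  · exact (LinearEquiv.ofBijective g.f1 h.1).symm_apply_apply x
  · exact (LinearEquiv.ofBijective g.f0 h.2).symm_apply_apply x

theorem comp_inv {M N : KObj F} (g : KHom M N) (h : g.Bij) : g.comp (g.inv h) = id N := by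
  ext x
  · exact (LinearEquiv.ofBijective g.f1 h.1).apply_symm_apply x
  · exact (LinearEquiv.ofBijective g.f0 h.2).apply_symm_apply x

theorem inv_bij {M N : KObj F} (g : KHom M N) (h : g.Bij) : (g.inv h).Bij :=
  ⟨(LinearEquiv.ofBijective g.f1 h.1).symm.bijective, (LinearEquiv.ofBijective g.f0 h.2).symm.bijective⟩

theorem comp_assoc {M N K L : KObj F} (h : KHom K L) (g : KHom N K) (f : KHom M N) :
    (h.comp g).comp f = h.comp (g.comp f) := rfl
theorem id_comp {M N : KObj F} (f : KHom M N) : (id N).comp f = f := rfl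
theorem comp_id {M N : KObj F} (f : KHom M N) : f.comp (id M) = f := rfl

theorem Inj.comp {M N K : KObj F} {g : KHom N K} {f : KHom M N} (hg : g.Inj) (hf : f.Inj) :
    (g.comp f).Inj := ⟨hg.1.comp hf.1, hg.2.comp hf.2⟩
theorem Surj.comp {M N K : KObj F} {g : KHom N K} {f : KHom M N} (hg : g.Surj) (hf : f.Surj) :
    (g.comp f).Surj := ⟨hg.1.comp hf.1, hg.2.comp hf.2⟩
theorem Bij.comp {M N K : KObj F} {g : KHom N K} {f : KHom M N} (hg : g.Bij) (hf : f.Bij) :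
    (g.comp f).Bij := ⟨hg.1.comp hf.1, hg.2.comp hf.2⟩

instance instFinite [Finite F] (M N : KObj F) : Finite (KHom M N) := by
  have : Finite M.V := Module.finite_of_finite F
  have : Finite M.U := Module.finite_of_finite F
  have : Finite N.V := Module.finite_of_finite F
  have : Finite N.U := Module.finite_of_finite F
  have : Finite (M.V →ₗ[F] N.V) := Finite.of_injective _ (DFunLike.coe_injective)
  have : Finite (M.U →ₗ[F] N.U) := Finite.of_injective _ (DFunLike.coe_injective)
  refine Finite.of_injective (fun g : KHom M N => (g.f1, g.f0)) ?_
  intro a b h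
  simp only [Prod.mk.injEq] at h
  exact KHom.ext h.1 h.2

theorem bij_of_inj_finrank {M N : KObj F} {g : KHom M N} (h : g.Inj)
    (h' : Module.finrank F N.V + Module.finrank F N.U ≤
      Module.finrank F M.V + Module.finrank F M.U) : g.Bij := by
  have h1 := LinearMap.finrank_le_finrank_of_injective h.1
  have h0 := LinearMap.finrank_le_finrank_of_injective h.2
  exact ⟨⟨h.1, (LinearMap.injective_iff_surjective_of_finrank_eq_finrank (by omega)).1 h.1⟩,
    ⟨h.2, (LinearMap.injective_iff_surjective_of_finrank_eq_finrank (by omega)).1 h.2⟩⟩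

theorem bij_of_surj_finrank {M N : KObj F} {g : KHom M N} (h : g.Surj)
    (h' : Module.finrank F M.V + Module.finrank F M.U ≤
      Module.finrank F N.V + Module.finrank F N.U) : g.Bij := by
  have h1 := LinearMap.finrank_le_finrank_of_surjective h.1
  have h0 := LinearMap.finrank_le_finrank_of_surjective h.2
  exact ⟨⟨(LinearMap.injective_iff_surjective_of_finrank_eq_finrank (by omega)).2 h.1, h.1⟩,
    ⟨(LinearMap.injective_iff_surjective_of_finrank_eq_finrank (by omega)).2 h.2, h.2⟩⟩

end KHom

namespace KObj
variable {F : Type} [Field F]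

def Iso (M N : KObj F) : Prop := ∃ g : KHom M N, g.Bij

theorem Iso.refl (M : KObj F) : Iso M M :=
  ⟨KHom.id M, Function.bijective_id, Function.bijective_id⟩
theorem Iso.symm {M N : KObj F} : Iso M N → Iso N M := fun ⟨g, h⟩ => ⟨g.inv h, g.inv_bij h⟩
theorem Iso.trans {M N K : KObj F} : Iso M N → Iso N K → Iso M K :=
  fun ⟨g, h⟩ ⟨g', h'⟩ => ⟨g'.comp g, h'.comp h⟩

noncomputable def hc (M N : KObj F) : ℕ := Nat.card (KHom M N)
noncomputable def ic (M N : KObj F) : ℕ := Nat.card {g : KHom M N // g.Inj}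
noncomputable def sc (M N : KObj F) : ℕ := Nat.card {g : KHom M N // g.Surj}
noncomputable def bc (M N : KObj F) : ℕ := Nat.card {g : KHom M N // g.Bij}

noncomputable def preEquiv {M M' : KObj F} (N : KObj F) (e : KHom M M') (h : e.Bij) :
    KHom M' N ≃ KHom M N where
  toFun g := g.comp e
  invFun g := g.comp (e.inv h)
  left_inv g := by beta_reduce; rw [KHom.comp_assoc, KHom.comp_inv]; rfl
  right_inv g := by beta_reduce; rw [KHom.comp_assoc, KHom.inv_comp]; rfl

noncomputable def postEquiv {N N' : KObj F} (M : KObj F) (e : KHom N N') (h : e.Bij) :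
    KHom M N ≃ KHom M N' where
  toFun g := e.comp g
  invFun g := (e.inv h).comp g
  left_inv g := by beta_reduce; rw [← KHom.comp_assoc, KHom.inv_comp]; rfl
  right_inv g := by beta_reduce; rw [← KHom.comp_assoc, KHom.comp_inv]; rfl

theorem Iso.hc_left {M M' : KObj F} (h : Iso M M') (N : KObj F) : hc M N = hc M' N := by
  obtain ⟨e, he⟩ := h
  exact (Nat.card_congr (preEquiv N e he)).symm

theorem Iso.hc_right {N N' : KObj F} (h : Iso N N') (M : KObj F) : hc M N = hc M N' := by
  obtain ⟨e, he⟩ := h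
  exact (Nat.card_congr (postEquiv M e he))

theorem Iso.ic_left {M M' : KObj F} (h : Iso M M') (N : KObj F) : ic M N = ic M' N := by
  obtain ⟨e, he⟩ := h
  refine (Nat.card_congr ((preEquiv N e he).subtypeEquiv fun g => ⟨fun hg => hg.comp he.inj, fun hg => ?_⟩)).symm
  have := KHom.Inj.comp hg (e.inv_bij he).inj
  rwa [← (preEquiv N e he).left_inv g]

theorem Iso.ic_right {N N' : KObj F} (h : Iso N N') (M : KObj F) : ic M N = ic M N' := by
  obtain ⟨e, he⟩ := h
  refine (Nat.card_congr ((postEquiv M e he).subtypeEquiv fun g => ⟨fun hg => he.inj.comp hg, fun hg => ?_⟩))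
  have := KHom.Inj.comp (e.inv_bij he).inj hg
  rwa [← (postEquiv M e he).left_inv g]

theorem Iso.sc_right {N N' : KObj F} (h : Iso N N') (M : KObj F) : sc M N = sc M N' := by
  obtain ⟨e, he⟩ := h
  refine (Nat.card_congr ((postEquiv M e he).subtypeEquiv fun g => ⟨fun hg => he.surj.comp hg, fun hg => ?_⟩))
  have := KHom.Surj.comp (e.inv_bij he).surj hg
  rwa [← (postEquiv M e he).left_inv g]

theorem Iso.bc_right {N N' : KObj F} (h : Iso N N') (M : KObj F) : bc M N = bc M N' := by
  obtain ⟨e, he⟩ := h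
  refine (Nat.card_congr ((postEquiv M e he).subtypeEquiv fun g => ⟨fun hg => he.comp hg, fun hg => ?_⟩))
  have := KHom.Bij.comp (e.inv_bij he) hg
  rwa [← (postEquiv M e he).left_inv g]

theorem Iso.finrankV {M N : KObj F} (h : Iso M N) : Module.finrank F M.V = Module.finrank F N.V := by
  obtain ⟨e, he⟩ := h
  exact (LinearEquiv.ofBijective e.f0 he.2).finrank_eq

theorem Iso.finrankU {M N : KObj F} (h : Iso M N) : Module.finrank F M.U = Module.finrank F N.U := by
  obtain ⟨e, he⟩ := h
  exact (LinearEquiv.ofBijective e.f1 he.1).finrank_eq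

theorem Iso.inj_i {M N : KObj F} (h : Iso M N) (hi : Function.Injective M.i) :
    Function.Injective N.i := by
  obtain ⟨e, he⟩ := h.symm
  intro a b hab
  apply he.1.1
  apply hi
  rw [← e.hi, ← e.hi, hab]

theorem ic_self (M : KObj F) : ic M M = bc M M := by
  refine Nat.card_congr (Equiv.subtypeEquivRight fun g => ⟨fun h => KHom.bij_of_inj_finrank h le_rfl, fun h => h.inj⟩)
theorem sc_self (M : KObj F) : sc M M = bc M M := by
  refine Nat.card_congr (Equiv.subtypeEquivRight fun g => ⟨fun h => KHom.bij_of_surj_finrank h le_rfl, fun h => h.surj⟩)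

theorem ic_self_pos [Finite F] (M : KObj F) : 0 < ic M M := by
  have : Nonempty {g : KHom M M // g.Inj} := ⟨⟨KHom.id M, Function.injective_id, Function.injective_id⟩⟩
  exact Nat.card_pos

theorem iso_of_ic_ne {M N : KObj F} (h : ic M N ≠ 0)
    (h' : Module.finrank F N.V + Module.finrank F N.U ≤
      Module.finrank F M.V + Module.finrank F M.U) : Iso M N := by
  obtain ⟨⟨g, hg⟩⟩ := (Nat.card_ne_zero.1 h).1
  exact ⟨g, KHom.bij_of_inj_finrank hg h'⟩

theorem iso_of_sc_ne {M N : KObj F} (h : sc M N ≠ 0)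
    (h' : Module.finrank F M.V + Module.finrank F M.U ≤
      Module.finrank F N.V + Module.finrank F N.U) : Iso M N := by
  obtain ⟨⟨g, hg⟩⟩ := (Nat.card_ne_zero.1 h).1
  exact ⟨g, KHom.bij_of_surj_finrank hg h'⟩

/-- subobjects -/
@[ext] structure Sub (N : KObj F) where
  A1 : Submodule F N.U
  A0 : Submodule F N.V
  hi : ∀ x ∈ A1, N.i x ∈ A0
  ht : ∀ x ∈ A1, N.t x ∈ A0

def Sub.obj {N : KObj F} (A : Sub N) : KObj F where
  V := A.A0
  U := A.A1
  i := N.i.restrict A.hi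
  t := N.t.restrict A.ht

def Sub.incl {N : KObj F} (A : Sub N) : KHom A.obj N where
  f1 := A.A1.subtype
  f0 := A.A0.subtype
  hi _ := rfl
  ht _ := rfl

theorem Sub.incl_inj {N : KObj F} (A : Sub N) : A.incl.Inj :=
  ⟨Subtype.val_injective, Subtype.val_injective⟩

instance [Finite F] (N : KObj F) : Finite (Sub N) := by
  have : Finite N.V := Module.finite_of_finite F
  have : Finite N.U := Module.finite_of_finite F
  have : Finite (Submodule F N.V) := Finite.of_injective _ (SetLike.coe_injective)
  have : Finite (Submodule F N.U) := Finite.of_injective _ (SetLike.coe_injective)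
  refine Finite.of_injective (fun g : Sub N => (g.A1, g.A0)) ?_
  intro a b h
  simp only [Prod.mk.injEq] at h
  exact Sub.ext h.1 h.2

def image {M N : KObj F} (g : KHom M N) : Sub N where
  A1 := LinearMap.range g.f1
  A0 := LinearMap.range g.f0
  hi := by rintro _ ⟨u, rfl⟩; exact ⟨M.i u, g.hi u⟩
  ht := by rintro _ ⟨u, rfl⟩; exact ⟨M.t u, g.ht u⟩

def toImage {M N : KObj F} (g : KHom M N) : KHom M (image g).obj where
  f1 := g.f1.rangeRestrict
  f0 := g.f0.rangeRestrict
  hi u := Subtype.ext (g.hi u)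
  ht u := Subtype.ext (g.ht u)

theorem toImage_surj {M N : KObj F} (g : KHom M N) : (toImage g).Surj :=
  ⟨g.f1.surjective_rangeRestrict, g.f0.surjective_rangeRestrict⟩

theorem image_incl_comp {M N : KObj F} (A : Sub N) (g : KHom M A.obj) (hg : g.Surj) :
    image (A.incl.comp g) = A := by
  ext x
  · constructor
    · rintro ⟨u, rfl⟩; exact (g.f1 u).2
    · intro hx; obtain ⟨u, hu⟩ := hg.1 ⟨x, hx⟩
      exact ⟨u, congrArg Subtype.val hu⟩
  · constructor
    · rintro ⟨u, rfl⟩; exact (g.f0 u).2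
    · intro hx; obtain ⟨u, hu⟩ := hg.2 ⟨x, hx⟩
      exact ⟨u, congrArg Subtype.val hu⟩

theorem incl_comp_cancel {M N : KObj F} (A : Sub N) (g g' : KHom M A.obj)
    (h : A.incl.comp g = A.incl.comp g') : g = g' := by
  ext x
  · have := congrArg (fun k => KHom.f1 k x) h
    exact A.incl_inj.1 this
  · have := congrArg (fun k => KHom.f0 k x) h
    exact A.incl_inj.2 this

theorem factor_bij (M N : KObj F) :
    Function.Bijective (fun z : (Σ A : Sub N, {g : KHom M A.obj // g.Surj}) => z.1.incl.comp z.2.1) := by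
  constructor
  · rintro ⟨A, g, hg⟩ ⟨A', g', hg'⟩ h
    have h1 := image_incl_comp A g hg
    have h2 := image_incl_comp A' g' hg'
    simp only at h
    rw [h] at h1
    obtain rfl : A = A' := h1.symm.trans h2
    obtain rfl := incl_comp_cancel A g g' h
    rfl
  · intro g
    exact ⟨⟨image g, toImage g, toImage_surj g⟩, rfl⟩

theorem hc_eq_sum [Finite F] (M N : KObj F) [Fintype (Sub N)] :
    hc M N = ∑ A : Sub N, sc M A.obj := by
  unfold hc sc
  rw [← Nat.card_sigma]
  exact (Nat.card_congr (Equiv.ofBijective _ (factor_bij M N))).symm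

theorem factor_inj_bij (M N : KObj F) :
    Function.Bijective (fun z : (Σ A : Sub N, {g : KHom M A.obj // g.Bij}) =>
      (⟨z.1.incl.comp z.2.1, z.1.incl_inj.comp z.2.2.inj⟩ : {g : KHom M N // g.Inj})) := by
  constructor
  · rintro ⟨A, g, hg⟩ ⟨A', g', hg'⟩ h
    simp only [Subtype.mk.injEq] at h
    have h1 := image_incl_comp A g hg.surj
    have h2 := image_incl_comp A' g' hg'.surj
    rw [h] at h1
    obtain rfl : A = A' := h1.symm.trans h2
    obtain rfl := incl_comp_cancel A g g' h
    rfl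
  · rintro ⟨g, hg⟩
    refine ⟨⟨image g, toImage g, KHom.bij_of ?_ (toImage_surj g)⟩, rfl⟩
    constructor
    · intro a b h; exact hg.1 (congrArg Subtype.val h)
    · intro a b h; exact hg.2 (congrArg Subtype.val h)

open Classical in
theorem ic_eq_mul [Finite F] (M N : KObj F) [Fintype (Sub N)] :
    ic M N = (Finset.univ.filter (fun A : Sub N => Iso M A.obj)).card * ic M M := by
  have h : ic M N = ∑ A : Sub N, bc M A.obj := by
    unfold ic bc
    rw [← Nat.card_sigma]
    exact (Nat.card_congr (Equiv.ofBijective _ (factor_inj_bij M N))).symm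
  rw [h, Finset.card_filter, Finset.sum_mul]
  refine Finset.sum_congr rfl fun A _ => ?_
  split_ifs with hA
  · rw [one_mul, ic_self, hA.bc_right M]
  · rw [zero_mul]
    unfold bc
    rw [Nat.card_eq_zero]
    left
    exact ⟨fun g => hA ⟨g.1, g.2⟩⟩

theorem ldu [Finite F] {T : Type} [Fintype T] (S : T → KObj F)
    (hS : ∀ a b, Iso (S a) (S b) → a = b) (b : T)
    (hsub : ∀ A : Sub (S b), ∃ c, Iso A.obj (S c)) (M : KObj F) :
    (hc M (S b) : ℚ) = ∑ c, (sc M (S c) : ℚ) * (ic (S c) (S b) : ℚ) / (ic (S c) (S c) : ℚ) := by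
  classical
  have : Fintype (Sub (S b)) := Fintype.ofFinite _
  choose k hk using hsub
  rw [hc_eq_sum]
  have : ∀ A : Sub (S b), sc M A.obj = ∑ c, if Iso (S c) A.obj then sc M (S c) else 0 := by
    intro A
    rw [Finset.sum_eq_single (k A)]
    · rw [if_pos (hk A).symm, (hk A).sc_right]
    · intro c _ hc
      rw [if_neg]
      intro h
      exact hc (hS _ _ (h.trans (hk A)))
    · simp
  simp_rw [this]
  rw [Finset.sum_comm]
  push_cast
  refine Finset.sum_congr rfl fun c _ => ?_
  rw [ic_eq_mul (S c) (S b), ← Finset.sum_filter, Finset.sum_const]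
  have := (ic_self_pos (S c)).ne'
  push_cast
  field_simp
  simp [mul_comm]

end KObj


namespace KObj
variable {F : Type} [Field F]

/-- derived object -/
abbrev D (N : KObj F) : KObj F where
  V := N.U
  U := LinearMap.eqLocus (N.t ∘ₗ LinearMap.fst F N.U N.U) (N.i ∘ₗ LinearMap.snd F N.U N.U)
  i := LinearMap.fst F N.U N.U ∘ₗ Submodule.subtype _
  t := LinearMap.snd F N.U N.U ∘ₗ Submodule.subtype _

def DUmk (N : KObj F) (a b : N.U) (h : N.t a = N.i b) : (D N).U := ⟨(a, b), h⟩

theorem D_rel (N : KObj F) (x : (D N).U) : N.t ((D N).i x) = N.i ((D N).t x) := x.2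

theorem D_ext (N : KObj F) (x y : (D N).U) (h : (D N).i x = (D N).i y) (h' : (D N).t x = (D N).t y) :
    x = y := Subtype.ext (Prod.ext h h')

theorem D_inj (N : KObj F) (h : Function.Injective N.i) : Function.Injective (D N).i := by
  intro x y hxy
  refine D_ext N x y hxy (h ?_)
  rw [← D_rel, ← D_rel, hxy]

def Dmap {M N : KObj F} (g : KHom M N) : KHom (D M) (D N) where
  f1 := LinearMap.codRestrict _ ((g.f1 ∘ₗ (D M).i).prod (g.f1 ∘ₗ (D M).t)) (by
    intro x
    change N.t (g.f1 ((D M).i x)) = N.i (g.f1 ((D M).t x))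
    rw [← g.ht, ← g.hi, D_rel])
  f0 := g.f1
  hi _ := rfl
  ht _ := rfl

theorem Iso.D {M N : KObj F} (h : Iso M N) : Iso (D M) (D N) := by
  obtain ⟨g, hg⟩ := h
  refine ⟨Dmap g, ⟨?_, ?_⟩, hg.1⟩
  · intro x y hxy
    refine D_ext M x y (hg.1.1 ?_) (hg.1.1 ?_)
    · exact congrArg (KObj.D N).i hxy
    · exact congrArg (KObj.D N).t hxy
  · intro y
    obtain ⟨a, ha⟩ := hg.1.2 ((KObj.D N).i y)
    obtain ⟨b, hb⟩ := hg.1.2 ((KObj.D N).t y)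
    refine ⟨DUmk M a b ?_, D_ext N _ _ ha hb⟩
    apply hg.2.1
    rw [g.ht, g.hi, ha, hb, D_rel]

def rel (M : KObj F) : M.U →ₗ[F] M.V × M.V := M.t.prod (-M.i)

/-- left adjoint of `D`, plus `c` free generators -/
abbrev Phi (c : ℕ) (M : KObj F) : KObj F where
  V := ((M.V × M.V) ⧸ LinearMap.range (rel M)) × (Fin c → F)
  U := M.V
  i := LinearMap.inl F _ _ ∘ₗ (LinearMap.range (rel M)).mkQ ∘ₗ LinearMap.inl F M.V M.V
  t := LinearMap.inl F _ _ ∘ₗ (LinearMap.range (rel M)).mkQ ∘ₗ LinearMap.inr F M.V M.V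

def PhiEquiv (c : ℕ) (M N : KObj F) :
    KHom (Phi c M) N ≃ KHom M (D N) × ((Fin c → F) →ₗ[F] N.V) where
  toFun g := (⟨LinearMap.codRestrict _ ((g.f1 ∘ₗ M.i).prod (g.f1 ∘ₗ M.t)) (by
      intro x
      change N.t (g.f1 (M.i x)) = N.i (g.f1 (M.t x))
      rw [← g.ht (M.i x), ← g.hi (M.t x)]
      congr 1
      refine Prod.ext ?_ rfl
      refine ((Submodule.Quotient.eq _).2 ?_)
      refine ⟨-x, ?_⟩
      simp [rel]), g.f1, fun _ => rfl, fun _ => rfl⟩, g.f0 ∘ₗ LinearMap.inr F _ _)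
  invFun p := 
    { f1 := p.1.f0
      f0 := LinearMap.coprod (Submodule.liftQ _ (LinearMap.coprod (N.i ∘ₗ p.1.f0) (N.t ∘ₗ p.1.f0)) (by
          rintro _ ⟨x, rfl⟩
          have h1 := p.1.hi x
          have h2 := p.1.ht x
          have h3 := D_rel N (p.1.f1 x)
          rw [← h1, ← h2] at h3
          change N.i (p.1.f0 (M.t x)) + N.t (p.1.f0 (-M.i x)) = 0
          rw [map_neg, map_neg, h3]; simp)) p.2
      hi := fun u => by simp [Phi]
      ht := fun u => by simp [Phi] }
  left_inv g := by
    refine KHom.ext rfl ?_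
    refine LinearMap.prod_ext (Submodule.linearMap_qext _ (LinearMap.prod_ext ?_ ?_)) ?_
    · ext x
      have := g.hi x
      simp [Phi] at this ⊢
      exact this.symm
    · ext x
      have := g.ht x
      simp [Phi] at this ⊢
      exact this.symm
    · apply LinearMap.ext; intro x; simp
  right_inv p := by
    refine Prod.ext ?_ ?_
    · refine KHom.ext ?_ rfl
      apply LinearMap.ext; intro x
      exact D_ext N _ _ (p.1.hi x) (p.1.ht x)
    · apply LinearMap.ext; intro x; simp

theorem hc_Phi (c : ℕ) (M N : KObj F) :
    hc (Phi c M) N = hc M (D N) * Nat.card N.V ^ c := by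
  unfold hc
  rw [Nat.card_congr (PhiEquiv c M N), Nat.card_prod]
  congr 1
  rw [Nat.card_congr (LinearEquiv.piRing F N.V (Fin c) F).toEquiv, Nat.card_fun, Nat.card_fin]

theorem rel_inj (M : KObj F) (h : Function.Injective M.i) : Function.Injective (rel M) := by
  intro x y hxy
  have := congrArg Prod.snd hxy
  exact h (neg_injective this)

theorem finrank_PhiV (c : ℕ) (M : KObj F) (h : Function.Injective M.i) :
    Module.finrank F (Phi c M).V + Module.finrank F M.U = 2 * Module.finrank F M.V + c := by
  have h1 : Module.finrank F (Phi c M).V =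
    Module.finrank F ((M.V × M.V) ⧸ LinearMap.range (rel M)) + c := by
    change Module.finrank F (((M.V × M.V) ⧸ LinearMap.range (rel M)) × (Fin c → F)) = _
    rw [Module.finrank_prod]; simp
  have h2 := Submodule.finrank_quotient_add_finrank (LinearMap.range (rel M))
  rw [LinearMap.finrank_range_of_inj (rel_inj M h), Module.finrank_prod] at h2
  omega

theorem Phi_inj (c : ℕ) (M : KObj F) (h : Function.Injective M.i) :
    Function.Injective (Phi c M).i := by
  rw [← LinearMap.ker_eq_bot, LinearMap.ker_eq_bot']
  intro x hx
  have hx' := congrArg Prod.fst hx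
  have : (Submodule.Quotient.mk (x, 0) : (M.V × M.V) ⧸ LinearMap.range (rel M)) = 0 := hx'
  rw [Submodule.Quotient.mk_eq_zero] at this
  obtain ⟨y, hy⟩ := this
  have h1 := congrArg Prod.fst hy
  have h2 := congrArg Prod.snd hy
  simp [rel] at h1 h2
  have : y = 0 := h (by simpa using h2)
  rw [← h1, this, map_zero]

theorem D_Phi (c : ℕ) (M : KObj F) (h : Function.Injective M.i) : Iso M (D (Phi c M)) := by
  let g : KHom M (D (Phi c M)) := (PhiEquiv c M (Phi c M) (KHom.id _)).1
  have h0 : ∀ x, g.f0 x = x := fun x => rfl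
  refine ⟨g, ⟨?_, ?_⟩, Function.bijective_id⟩
  · intro x y hxy
    apply h
    have := congrArg (D (Phi c M)).i hxy
    rw [← g.hi, ← g.hi] at this
    exact this
  · intro y
    have hy := D_rel _ y
    have hy' := congrArg Prod.fst hy
    have hy'' : (Submodule.Quotient.mk (0, (D (Phi c M)).i y) : (M.V × M.V) ⧸ LinearMap.range (rel M))
      = Submodule.Quotient.mk ((D (Phi c M)).t y, 0) := hy'
    rw [eq_comm, Submodule.Quotient.eq] at hy''
    obtain ⟨x, hx⟩ := hy''
    have h1 := congrArg Prod.fst hx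
    have h2 := congrArg Prod.snd hx
    simp [rel] at h1 h2
    refine ⟨x, D_ext _ _ _ ?_ ?_⟩
    · rw [← g.hi]; exact h2
    · rw [← g.ht]; exact h1

theorem iso_Phi_D (N : KObj F) : ∃ c, Iso (Phi c (D N)) N := by
  obtain ⟨C, hC⟩ := Submodule.exists_isCompl (LinearMap.range (LinearMap.coprod N.i N.t))
  let b : (Fin (Module.finrank F C) → F) ≃ₗ[F] C := (Module.finBasis F C).equivFun.symm
  refine ⟨Module.finrank F C, (PhiEquiv _ (D N) N).symm (KHom.id _, C.subtype ∘ₗ b.toLinearMap),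
    Function.bijective_id, ?_, ?_⟩
  · rw [← LinearMap.ker_eq_bot, LinearMap.ker_eq_bot']
    rintro ⟨x, y⟩ hxy
    obtain ⟨⟨x1, x2⟩, rfl⟩ := Submodule.Quotient.mk_surjective _ x
    have hxy' : (N.i x1 + N.t x2) + (b y : N.V) = 0 := hxy
    have h1 : (N.i x1 + N.t x2) ∈ LinearMap.range (LinearMap.coprod N.i N.t) := ⟨(x1, x2), rfl⟩
    have h2 : N.i x1 + N.t x2 = -(b y : N.V) := eq_neg_of_add_eq_zero_left hxy'
    have h3 : N.i x1 + N.t x2 = 0 := by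
      have : N.i x1 + N.t x2 ∈ LinearMap.range (LinearMap.coprod N.i N.t) ⊓ C :=
        ⟨h1, by rw [h2]; exact neg_mem (b y).2⟩
      rwa [hC.inf_eq_bot, Submodule.mem_bot] at this
    have h4 : y = 0 := by
      rw [h3, zero_add] at hxy'
      exact b.map_eq_zero_iff.1 (Subtype.ext hxy')
    subst h4
    refine Prod.ext ?_ rfl
    refine (Submodule.Quotient.mk_eq_zero _).2 ?_
    refine ⟨DUmk N (-x2) x1 ?_, ?_⟩
    · rw [map_neg]; exact (eq_neg_of_add_eq_zero_left h3).symm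
    · change ((x1, -(-x2)) : N.U × N.U) = (x1, x2)
      rw [neg_neg]
  · intro v
    have hv : v ∈ LinearMap.range (LinearMap.coprod N.i N.t) ⊔ C := by rw [hC.sup_eq_top]; trivial
    obtain ⟨_, ⟨⟨x1, x2⟩, rfl⟩, z, hz, rfl⟩ := Submodule.mem_sup.1 hv
    obtain ⟨y, hy⟩ := b.surjective ⟨z, hz⟩
    refine ⟨(Submodule.Quotient.mk (x1, x2), y), ?_⟩
    change N.i x1 + N.t x2 + (b y : N.V) = N.i x1 + N.t x2 + z
    rw [hy]

theorem Iso.Phi {M N : KObj F} (h : Iso M N) (c : ℕ) : Iso (Phi c M) (Phi c N) := by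
  obtain ⟨g, hg⟩ := h
  let e1 := LinearEquiv.ofBijective g.f1 hg.1
  let e0 := LinearEquiv.ofBijective g.f0 hg.2
  have key : ∀ u, (e0.prodCongr e0) (rel M u) = rel N (e1 u) := by
    intro u
    refine Prod.ext (g.ht u) ?_
    change g.f0 (-M.i u) = - N.i (g.f1 u)
    rw [map_neg, g.hi]
  let Q := Submodule.Quotient.equiv (LinearMap.range (rel M)) (LinearMap.range (rel N))
    (e0.prodCongr e0) (by
      ext x
      constructor
      · rintro ⟨_, ⟨u, rfl⟩, rfl⟩
        exact ⟨e1 u, (key u).symm⟩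
      · rintro ⟨u, rfl⟩
        obtain ⟨u, rfl⟩ := e1.surjective u
        exact ⟨_, ⟨u, rfl⟩, key u⟩)
  refine ⟨⟨g.f0, (Q.prodCongr (LinearEquiv.refl F (Fin c → F))).toLinearMap, ?_, ?_⟩, hg.2, 
    (Q.prodCongr (LinearEquiv.refl F (Fin c → F))).bijective⟩
  · intro u
    refine Prod.ext ?_ rfl
    change Submodule.Quotient.mk (g.f0 u, g.f0 0) = Submodule.Quotient.mk (g.f0 u, 0)
    rw [map_zero]
  · intro u
    refine Prod.ext ?_ rfl
    change Submodule.Quotient.mk (g.f0 0, g.f0 u) = Submodule.Quotient.mk (0, g.f0 u)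
    rw [map_zero]

theorem D_of_bij (N : KObj F) (h : Function.Bijective N.i) : Iso (D N) N := by
  refine ⟨⟨(D N).i, N.i, fun _ => rfl, fun x => (D_rel N x).symm⟩, ⟨D_inj N h.1, ?_⟩, h⟩
  intro a
  obtain ⟨b, hb⟩ := h.2 (N.t a)
  exact ⟨DUmk N a b hb.symm, rfl⟩

theorem Phi_zero_of_bij (N : KObj F) (h : Function.Bijective N.i) : Iso (Phi 0 N) N := by
  obtain ⟨c, hc⟩ := iso_Phi_D N
  have h1 := ((D_of_bij N h).Phi c).symm.trans hc
  have h2 := finrank_PhiV c N h.1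
  rw [h1.finrankV, (LinearEquiv.ofBijective N.i h).finrank_eq] at h2
  obtain rfl : c = 0 := by omega
  exact h1

theorem hc_bij (M N : KObj F) (h : Function.Bijective M.i) : hc M N = hc M (D N) := by
  rw [← (Phi_zero_of_bij M h).hc_left N, hc_Phi, pow_zero, mul_one]

end KObj


open Polynomial

namespace KObj
variable {F : Type} [Field F]

section reg
variable (F) (X : Type) [AddCommGroup X] [Module F X] [Module F[X] X] [IsScalarTower F F[X] X]
  [FiniteDimensional F X]

/-- regular object -/
noncomputable abbrev Reg : KObj F where
  V := X
  U := X
  i := LinearMap.id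
  t := (LinearMap.lsmul F[X] X (Polynomial.X : F[X])).restrictScalars F

theorem Reg_bij : Function.Bijective (Reg F X).i := Function.bijective_id

variable (Y : Type) [AddCommGroup Y] [Module F Y] [Module F[X] Y] [IsScalarTower F F[X] Y]
  [FiniteDimensional F Y]

def mkLin {X Y : Type} [AddCommGroup X] [Module F X] [Module F[X] X] [IsScalarTower F F[X] X]
    [AddCommGroup Y] [Module F Y] [Module F[X] Y] [IsScalarTower F F[X] Y]
    (f : X →ₗ[F] Y) (h : ∀ x, f ((Polynomial.X : F[X]) • x) = (Polynomial.X : F[X]) • f x) :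
    X →ₗ[F[X]] Y where
  toFun := f
  map_add' := map_add f
  map_smul' := by
    intro p
    induction p using Polynomial.induction_on' with
    | add p q hp hq => intro x; simp only [add_smul, map_add, hp, hq, RingHom.id_apply]
    | monomial n a =>
      induction n with
      | zero =>
        intro x
        simp only [Polynomial.monomial_zero_left, RingHom.id_apply]
        have h1 : ∀ (x : X), (C a : F[X]) • x = a • x := fun x => by
          rw [← Polynomial.algebraMap_eq, algebraMap_smul]
        have h2 : ∀ (x : Y), (C a : F[X]) • x = a • x := fun x => by
          rw [← Polynomial.algebraMap_eq, algebraMap_smul]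
        rw [h1, h2, map_smul]
      | succ n ih =>
        intro x
        rw [← Polynomial.monomial_mul_X, mul_smul, ih, h, RingHom.id_apply, RingHom.id_apply, mul_smul]

noncomputable def regHomEquiv : KHom (Reg F X) (Reg F Y) ≃ (X →ₗ[F[X]] Y) where
  toFun g := mkLin F g.f0 (by
    intro x
    have h1 := g.ht x
    have h2 := g.hi x
    change g.f0 ((Polynomial.X : F[X]) • x) = (Polynomial.X : F[X]) • g.f1 x at h1
    change g.f0 x = g.f1 x at h2
    rw [h1, h2])
  invFun f := ⟨f.restrictScalars F, f.restrictScalars F, fun _ => rfl, fun u => by simp⟩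
  left_inv g := by
    refine KHom.ext ?_ rfl
    apply LinearMap.ext; intro x
    exact g.hi x
  right_inv f := rfl

theorem hc_Reg : hc (Reg F X) (Reg F Y) = Nat.card (X →ₗ[F[X]] Y) :=
  Nat.card_congr (regHomEquiv F X Y)

theorem iso_Reg (e : X ≃ₗ[F[X]] Y) : Iso (Reg F X) (Reg F Y) :=
  ⟨(regHomEquiv F X Y).symm e.toLinearMap, e.bijective, e.bijective⟩

end reg

/-- number of elements killed by `f` -/
noncomputable def kc (f : F[X]) (Y : Type) [AddCommGroup Y] [Module F[X] Y] : ℕ :=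
  Nat.card {y : Y // f • y = 0}

theorem kc_congr (f : F[X]) {Y Z : Type} [AddCommGroup Y] [Module F[X] Y] [AddCommGroup Z] [Module F[X] Z]
    (e : Y ≃ₗ[F[X]] Z) : kc f Y = kc f Z := by
  refine Nat.card_congr (e.toEquiv.subtypeEquiv ?_)
  intro a
  simp only [LinearEquiv.coe_toEquiv, ← map_smul]
  exact e.map_eq_zero_iff.symm

theorem kc_pi (f : F[X]) {ι : Type} [Fintype ι] (Y : ι → Type) [∀ i, AddCommGroup (Y i)] [∀ i, Module F[X] (Y i)] :
    kc f (∀ i, Y i) = ∏ i, kc f (Y i) := by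
  unfold kc
  rw [← Nat.card_pi]
  refine Nat.card_congr ⟨fun y i => ⟨y.1 i, congrFun y.2 i⟩, fun y => ⟨fun i => (y i).1, funext fun i => (y i).2⟩,
    fun _ => rfl, fun _ => rfl⟩

theorem card_hom_quot (f : F[X]) (Y : Type) [AddCommGroup Y] [Module F[X] Y] :
    Nat.card ((F[X] ⧸ Ideal.span {f}) →ₗ[F[X]] Y) = kc f Y := by
  refine Nat.card_congr
    { toFun := fun g => ⟨g (Ideal.Quotient.mk _ 1), ?_⟩
      invFun := fun y => Submodule.liftQ _ (LinearMap.toSpanSingleton F[X] Y y.1) ?_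
      left_inv := ?_
      right_inv := ?_ }
  · rw [← map_smul]
    have : f • (Ideal.Quotient.mk (Ideal.span {f}) 1) = 0 := by
      change f • (Submodule.Quotient.mk 1 : F[X] ⧸ Ideal.span {f}) = 0
      rw [← Submodule.Quotient.mk_smul]
      rw [Submodule.Quotient.mk_eq_zero]
      simpa using Ideal.mem_span_singleton_self f
    rw [this, map_zero]
  · rw [Ideal.span, Submodule.span_le]
    simp only [Set.singleton_subset_iff, SetLike.mem_coe, LinearMap.mem_ker, LinearMap.toSpanSingleton_apply]
    exact y.2
  · intro g
    apply Submodule.linearMap_qext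
    apply LinearMap.ext_ring
    simp only [LinearMap.comp_apply, Submodule.mkQ_apply, Submodule.liftQ_apply, LinearMap.toSpanSingleton_apply, one_smul]
    rfl
  · intro y
    apply Subtype.ext
    change Submodule.liftQ _ _ _ (Submodule.Quotient.mk 1) = _
    rw [Submodule.liftQ_apply]; simp

theorem card_ker_eq_card_coker {Y : Type} [AddCommGroup Y] [Module F[X] Y] [Finite Y] (f : Y →ₗ[F[X]] Y) :
    Nat.card (LinearMap.ker f) = Nat.card (Y ⧸ LinearMap.range f) := by
  have h1 := Submodule.card_eq_card_quotient_mul_card (LinearMap.ker f)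
  have h2 := Submodule.card_eq_card_quotient_mul_card (LinearMap.range f)
  rw [Nat.card_congr f.quotKerEquivRange.toEquiv] at h1
  have h3 : 0 < Nat.card (LinearMap.range f) := Nat.card_pos
  rw [h1, mul_comm] at h2
  nlinarith [Nat.eq_of_mul_eq_mul_left h3 h2]

instance instFinQ [Finite F] (f : F[X]) [hf : Fact (f ≠ 0)] : Finite (F[X] ⧸ Ideal.span {f}) := by
  have : FiniteDimensional F (F[X] ⧸ Ideal.span {f}) := 
    (AdjoinRoot.powerBasis hf.out).finite
  exact Module.finite_of_finite F

theorem card_quot [Finite F] (f : F[X]) (hf : f ≠ 0) :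
    Nat.card (F[X] ⧸ Ideal.span {f}) = Nat.card F ^ f.natDegree := by
  have : FiniteDimensional F (F[X] ⧸ Ideal.span {f}) := 
    (AdjoinRoot.powerBasis hf).finite
  rw [Module.natCard_eq_pow_finrank (K := F), finrank_quotient_span_eq_natDegree]

theorem kc_quot [Finite F] (f g : F[X]) (hg : g ≠ 0) :
    kc f (F[X] ⧸ Ideal.span {g}) = Nat.card (F[X] ⧸ (Ideal.span {g} ⊔ Ideal.span {f})) := by
  have : Fact (g ≠ 0) := ⟨hg⟩
  have h := card_ker_eq_card_coker (LinearMap.lsmul F[X] (F[X] ⧸ Ideal.span {g}) f)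
  have h1 : kc f (F[X] ⧸ Ideal.span {g}) = Nat.card (LinearMap.ker (LinearMap.lsmul F[X] (F[X] ⧸ Ideal.span {g}) f)) := by
    refine Nat.card_congr (Equiv.subtypeEquivRight ?_)
    intro x; simp
  rw [h1, h, ← Nat.card_congr (DoubleQuot.quotQuotEquivQuotSup (Ideal.span {g}) (Ideal.span {f})).toEquiv]
  refine Nat.card_congr (Quotient.congr (Equiv.refl _) ?_)
  intro a b
  change (Submodule.quotientRel _).r _ _ ↔ (Submodule.quotientRel _).r _ _
  rw [Submodule.quotientRel_def, Submodule.quotientRel_def, Equiv.refl_apply, Equiv.refl_apply]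
  rw [Ideal.map_span, Set.image_singleton, Ideal.mem_span_singleton]
  simp only [LinearMap.mem_range, LinearMap.lsmul_apply]
  constructor
  · rintro ⟨y, hy⟩
    refine ⟨y, ?_⟩
    rw [← hy]; obtain ⟨z, rfl⟩ := Ideal.Quotient.mk_surjective y; rfl
  · rintro ⟨y, hy⟩
    refine ⟨y, ?_⟩
    rw [hy]; obtain ⟨z, rfl⟩ := Ideal.Quotient.mk_surjective y; rfl

theorem kc_same [Finite F] (p : F[X]) (hp : p ≠ 0) (a b : ℕ) :
    kc (p ^ a) (F[X] ⧸ Ideal.span {p ^ b}) = Nat.card F ^ (p.natDegree * min a b) := by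
  rw [kc_quot _ _ (pow_ne_zero _ hp)]
  have : (Ideal.span {p ^ b} ⊔ Ideal.span {p ^ a}) = Ideal.span {p ^ (min a b)} := by
    rcases le_total a b with h | h
    · rw [min_eq_left h, sup_eq_right, Ideal.span_singleton_le_span_singleton]
      exact pow_dvd_pow _ h
    · rw [min_eq_right h, sup_eq_left, Ideal.span_singleton_le_span_singleton]
      exact pow_dvd_pow _ h
  rw [this, card_quot _ (pow_ne_zero _ hp), natDegree_pow, mul_comm]

theorem kc_coprime [Finite F] (f g : F[X]) (hg : g ≠ 0) (h : IsCoprime g f) :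
    kc f (F[X] ⧸ Ideal.span {g}) = 1 := by
  rw [kc_quot _ _ hg]
  have : (Ideal.span {g} ⊔ Ideal.span {f}) = ⊤ := by
    rw [← Ideal.isCoprime_iff_sup_eq, Ideal.isCoprime_span_singleton_iff]; exact h
  rw [this]
  have : Subsingleton (F[X] ⧸ (⊤ : Ideal F[X])) := Ideal.Quotient.subsingleton_iff.2 rfl
  exact Nat.card_unique

theorem coprime_irr (p q : F[X]) (hp : Irreducible p) (hq : Irreducible q) (hpm : p.Monic) (hqm : q.Monic)
    (h : p ≠ q) (a b : ℕ) : IsCoprime (p ^ a) (q ^ b) := by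
  apply IsCoprime.pow
  rw [hp.coprime_iff_not_dvd]
  intro hd
  exact h (eq_of_monic_of_associated hpm hqm (hp.associated_of_dvd hq hd))

end KObj


open Polynomial

/-- the data of primes -/
structure Dat (k : ℕ) (deg : Fin k → ℕ) (F : Type) [Field F] where
  p : Fin k → F[X]
  inj : Function.Injective p
  monic : ∀ i, (p i).Monic
  irr : ∀ i, Irreducible (p i)
  hdeg : ∀ i, (p i).natDegree = deg i

namespace KObj
variable {F : Type} [Field F] {k n : ℕ} {deg : Fin k → ℕ}

theorem Dat_pos (P : Dat k deg F) (i : Fin k) : 0 < deg i := by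
  rw [← P.hdeg]; exact (P.irr i).natDegree_pos

abbrev Xm (P : Dat k deg F) (α : Fin k × Fin n → ℕ) : Type :=
  ∀ z : (Σ c : Fin k × Fin n, Fin (α c)), F[X] ⧸ Ideal.span {P.p z.1.1 ^ ((z.1.2 : ℕ) + 1)}

instance fdq (P : Dat k deg F) (i : Fin k) (b : ℕ) : FiniteDimensional F (F[X] ⧸ Ideal.span {P.p i ^ b}) :=
  (AdjoinRoot.powerBasis (pow_ne_zero b (P.irr i).ne_zero)).finite

def rk (deg : Fin k → ℕ) (α : Fin k × Fin n → ℕ) : ℕ := ∑ c, α c * (deg c.1 * ((c.2 : ℕ) + 1))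

def kd (deg : Fin k → ℕ) (i : Fin k) (a : ℕ) (α : Fin k × Fin n → ℕ) : ℕ := deg i * ∑ b, α (i, b) * min a ((b : ℕ) + 1)

def er (deg : Fin k → ℕ) (α β : Fin k × Fin n → ℕ) : ℕ := ∑ c, kd deg c.1 ((c.2 : ℕ) + 1) β * α c

theorem finrank_Xm (P : Dat k deg F) (α : Fin k × Fin n → ℕ) : Module.finrank F (Xm P α) = rk deg α := by
  rw [Module.finrank_pi_fintype, Fintype.sum_sigma, rk]
  refine Finset.sum_congr rfl fun c _ => ?_
  simp only [finrank_quotient_span_eq_natDegree, natDegree_pow, P.hdeg]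
  simp [mul_comm]

theorem kc_Xm [Finite F] (P : Dat k deg F) (α : Fin k × Fin n → ℕ) (i : Fin k) (a : ℕ) :
    kc (P.p i ^ a) (Xm P α) = Nat.card F ^ (kd deg i a α) := by
  rw [kc_pi, Fintype.prod_sigma, kd, Finset.mul_sum, ← Finset.prod_pow_eq_pow_sum, Fintype.prod_prod_type]
  rw [Finset.prod_eq_single i]
  · refine Finset.prod_congr rfl fun b _ => ?_
    rw [Finset.prod_congr rfl fun _ _ => kc_same _ (P.irr i).ne_zero _ _]
    simp only [Finset.prod_const, Finset.card_univ, Fintype.card_fin, ← pow_mul, P.hdeg]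
    congr 1; ring
  · intro j _ hj
    refine Finset.prod_eq_one fun b _ => Finset.prod_eq_one fun _ _ => ?_
    refine kc_coprime _ _ (pow_ne_zero _ (P.irr j).ne_zero) ?_
    exact coprime_irr _ _ (P.irr j) (P.irr i) (P.monic j) (P.monic i) (fun h => hj (P.inj h)) _ _
  · simp

theorem kc_Xm_other [Finite F] (P : Dat k deg F) (α : Fin k × Fin n → ℕ) (π : F[X]) (hm : π.Monic) (hi : Irreducible π)
    (hπ : π ∉ Set.range P.p) : kc π (Xm P α) = 1 := by
  rw [kc_pi]
  refine Finset.prod_eq_one fun z _ => ?_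
  refine kc_coprime _ _ (pow_ne_zero _ (P.irr _).ne_zero) ?_
  have := coprime_irr _ _ (P.irr z.1.1) hi (P.monic _) hm (fun h => hπ ⟨_, h⟩) ((z.1.2 : ℕ) + 1) 1
  rwa [pow_one] at this

theorem card_hom_Xm (P : Dat k deg F) (α : Fin k × Fin n → ℕ) (Y : Type) [AddCommGroup Y] [Module F[X] Y] :
    Nat.card (Xm P α →ₗ[F[X]] Y) = ∏ c, kc (P.p c.1 ^ ((c.2 : ℕ) + 1)) Y ^ α c := by
  rw [← Nat.card_congr (LinearMap.lsum F[X] (fun z : (Σ c : Fin k × Fin n, Fin (α c)) =>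
      F[X] ⧸ Ideal.span {P.p z.1.1 ^ ((z.1.2 : ℕ) + 1)}) F[X]).toEquiv]
  rw [Nat.card_pi, Fintype.prod_sigma]
  refine Finset.prod_congr rfl fun c _ => ?_
  rw [Finset.prod_congr rfl fun _ _ => card_hom_quot _ _]
  simp

theorem hc_Xm [Finite F] (P : Dat k deg F) (α β : Fin k × Fin n → ℕ) :
    hc (Reg F (Xm P α)) (Reg F (Xm P β)) = Nat.card F ^ er deg α β := by
  rw [hc_Reg, card_hom_Xm, er, ← Finset.prod_pow_eq_pow_sum]
  refine Finset.prod_congr rfl fun c _ => ?_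
  rw [kc_Xm, pow_mul]

/-- numeric uniqueness -/
theorem num_unique (α β : Fin n → ℕ)
    (h : ∀ a, ∑ b, α b * min a ((b : ℕ) + 1) = ∑ b, β b * min a ((b : ℕ) + 1)) : α = β := by
  have key : ∀ (γ : Fin n → ℕ) (b0 : Fin n), 
      2 * (∑ b, γ b * min ((b0 : ℕ) + 1) ((b : ℕ) + 1)) =
      (∑ b, γ b * min (b0 : ℕ) ((b : ℕ) + 1)) + (∑ b, γ b * min ((b0 : ℕ) + 2) ((b : ℕ) + 1)) + γ b0 := by
    intro γ b0
    have h0 : γ b0 = ∑ b, γ b * (if b = b0 then 1 else 0) := by simp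
    conv_rhs => rw [h0]
    rw [← Finset.sum_add_distrib, ← Finset.sum_add_distrib, Finset.mul_sum]
    refine Finset.sum_congr rfl fun b _ => ?_
    rw [← mul_add, ← mul_add, mul_left_comm]
    congr 1
    split_ifs with hb
    · subst hb; omega
    · have : (b : ℕ) ≠ b0 := fun h => hb (Fin.ext h)
      omega
  funext b0
  have h1 := key α b0
  have h2 := key β b0
  rw [h, h, h] at h1
  omega

theorem kd_unique (P : Dat k deg F) (α β : Fin k × Fin n → ℕ) (h : ∀ i a, kd deg i a α = kd deg i a β) :
    α = β := by
  funext ⟨i, b⟩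
  have := num_unique (fun b => α (i, b)) (fun b => β (i, b)) (fun a => Nat.eq_of_mul_eq_mul_left (Dat_pos P i) (h i a))
  exact congrFun this b

theorem Xm_unique [Finite F] (P : Dat k deg F) (α β : Fin k × Fin n → ℕ) 
    (h : ∀ i a, kc (P.p i ^ a) (Xm P α) = kc (P.p i ^ a) (Xm P β)) : α = β := by
  apply kd_unique P
  intro i a
  have := h i a
  rw [kc_Xm, kc_Xm] at this
  exact Nat.pow_right_injective Finite.one_lt_card this

section str

def IsSpec (P : Dat k deg F) (X : Type) [AddCommGroup X] [Module F[X] X] : Prop :=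
  ∀ π : F[X], π.Monic → Irreducible π → π ∉ Set.range P.p → kc π X = 1

theorem structure_Xm [Finite F] (P : Dat k deg F) (X : Type) [AddCommGroup X] [Module F X] [Module F[X] X]
    [IsScalarTower F F[X] X] [FiniteDimensional F X] (htor : Module.IsTorsion F[X] X) (hn : Module.finrank F X ≤ n)
    (hs : IsSpec P X) : ∃ α : Fin k × Fin n → ℕ, Nonempty (X ≃ₗ[F[X]] Xm P α) := by
  classical
  have : Module.Finite F[X] X := Module.Finite.of_restrictScalars_finite F F[X] X
  obtain ⟨ι, hι, q, hq, e, ⟨E⟩⟩ := Module.equiv_directSum_of_isTorsion htor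
  let E1 : X ≃ₗ[F[X]] (∀ j : ι, F[X] ⧸ Ideal.span {q j ^ e j}) :=
    E.trans (DirectSum.linearEquivFunOnFintype F[X] ι _)
  have hX : Finite X := Module.finite_of_finite F
  -- each nontrivial factor is of the desired form
  have hj : ∀ j, e j ≠ 0 → ∃ c : Fin k × Fin n, Ideal.span {q j ^ e j} = Ideal.span {P.p c.1 ^ ((c.2 : ℕ) + 1)} := by
    intro j hj
    set π := normalize (q j) with hπ
    have hass : Associated (q j) π := (normalize_associated _).symm
    have hirr : Irreducible π := hass.irreducible_iff.1 (hq j)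
    have hmon : π.Monic := Polynomial.monic_normalize (hq j).ne_zero
    have hspan : Ideal.span {q j ^ e j} = Ideal.span {π ^ e j} := 
      Ideal.span_singleton_eq_span_singleton.2 (hass.pow_pow)
    have hrange : π ∈ Set.range P.p := by
      by_contra hcon
      have h1 := hs π hmon hirr hcon
      rw [kc_congr π E1, kc_pi] at h1
      have h3 : kc π (F[X] ⧸ Ideal.span {q j ^ e j}) = 1 := 
        Finset.prod_eq_one_iff_of_one_le' (fun i _ => ?_) |>.1 h1 j (Finset.mem_univ _)
      · rw [hspan] at h3
        have h4 := kc_same π hirr.ne_zero 1 (e j)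
        rw [pow_one, h3, min_eq_left (by omega), mul_one] at h4
        have : 1 < Nat.card F ^ π.natDegree := Nat.one_lt_pow hirr.natDegree_pos.ne' Finite.one_lt_card
        omega
      · have hpos : 0 < ∏ i, kc π (F[X] ⧸ Ideal.span {q i ^ e i}) := by rw [h1]; exact one_pos
        exact Nat.one_le_iff_ne_zero.2 (Finset.prod_ne_zero_iff.1 hpos.ne' i (Finset.mem_univ _))
    obtain ⟨i, hi⟩ := hrange
    have hle : e j ≤ n := by
      refine le_trans ?_ hn
      let pr : X →ₗ[F] (F[X] ⧸ Ideal.span {q j ^ e j}) := ((LinearMap.proj j).comp E1.toLinearMap).restrictScalars F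
      have hsurj : Function.Surjective pr := by
        intro y
        refine ⟨E1.symm (Pi.single j y), ?_⟩
        simp [pr]
      have h5 := LinearMap.finrank_le_finrank_of_surjective hsurj
      rw [finrank_quotient_span_eq_natDegree, natDegree_pow] at h5
      exact le_trans (Nat.le_mul_of_pos_right _ (hq j).natDegree_pos) h5
    refine ⟨(i, ⟨e j - 1, by omega⟩), ?_⟩
    rw [hspan, ← hi]
    simp only
    rw [Nat.sub_add_cancel (by omega)]
  choose g hg using hj
  let ι' := {j // e j ≠ 0}
  let g' : ι' → Fin k × Fin n := fun j => g j.1 j.2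
  let E2 : (∀ j : ι, F[X] ⧸ Ideal.span {q j ^ e j}) ≃ₗ[F[X]] (∀ j : ι', F[X] ⧸ Ideal.span {q j.1 ^ e j.1}) :=
    LinearEquiv.ofBijective (LinearMap.pi fun j => LinearMap.proj j.1) (by
      have hss : ∀ j, e j = 0 → Subsingleton (F[X] ⧸ Ideal.span {q j ^ e j}) := by
        intro j hj
        rw [hj, pow_zero, Ideal.span_singleton_one]
        exact Ideal.Quotient.subsingleton_iff.2 rfl
      constructor
      · intro x y hxy
        funext j
        by_cases hj : e j = 0
        · have := hss j hj; exact Subsingleton.elim _ _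
        · exact congrFun hxy ⟨j, hj⟩
      · intro y
        refine ⟨fun j => if hj : e j ≠ 0 then y ⟨j, hj⟩ else 0, ?_⟩
        funext j
        obtain ⟨j, hj⟩ := j
        simp [hj])
  let α : Fin k × Fin n → ℕ := fun c => Fintype.card {j // g' j = c}
  let ε : (Σ c : Fin k × Fin n, Fin (α c)) ≃ ι' :=
    (Equiv.sigmaCongrRight fun c => (Fintype.equivFin {j // g' j = c}).symm).trans (Equiv.sigmaFiberEquiv g')
  have hε : ∀ z, g' (ε z) = z.1 := fun z => ((Fintype.equivFin {j // g' j = z.1}).symm z.2).2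
  let E3 : (∀ j : ι', F[X] ⧸ Ideal.span {q j.1 ^ e j.1}) ≃ₗ[F[X]]
      (∀ z, F[X] ⧸ Ideal.span {q (ε z).1 ^ e (ε z).1}) :=
    (LinearEquiv.piCongrLeft F[X] (fun j : ι' => F[X] ⧸ Ideal.span {q j.1 ^ e j.1}) ε).symm
  have hE4 : ∀ z, Ideal.span {q (ε z).1 ^ e (ε z).1} = Ideal.span {P.p z.1.1 ^ ((z.1.2 : ℕ) + 1)} := by
    intro z
    rw [hg (ε z).1 (ε z).2]
    change Ideal.span {P.p (g' (ε z)).1 ^ (((g' (ε z)).2 : ℕ) + 1)} = _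
    rw [hε]
  let E4 : (∀ z, F[X] ⧸ Ideal.span {q (ε z).1 ^ e (ε z).1}) ≃ₗ[F[X]] Xm P α :=
    LinearEquiv.piCongrRight fun z => Submodule.quotEquivOfEq _ _ (hE4 z)
  exact ⟨α, ⟨E1.trans (E2.trans (E3.trans E4))⟩⟩

end str
end KObj


open Polynomial

namespace KObj
variable {F : Type} [Field F] {k n : ℕ} {deg : Fin k → ℕ}

theorem fdQ (f : F[X]) (hf : f ≠ 0) : FiniteDimensional F (F[X] ⧸ Ideal.span {f}) :=
  (AdjoinRoot.powerBasis hf).finite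

noncomputable def Qobj (f : F[X]) (hf : f ≠ 0) : KObj F :=
  have := fdQ f hf
  Reg F (F[X] ⧸ Ideal.span {f})

theorem Qobj_bij (f : F[X]) (hf : f ≠ 0) : Function.Bijective (Qobj f hf).i := Function.bijective_id

theorem hc_Qobj (f : F[X]) (hf : f ≠ 0) (X : Type) [AddCommGroup X] [Module F X] [Module F[X] X]
    [IsScalarTower F F[X] X] [FiniteDimensional F X] : hc (Qobj f hf) (Reg F X) = kc f X := by
  have := fdQ f hf
  exact (hc_Reg F _ X).trans (card_hom_quot f X)

def Spec (P : Dat k deg F) (N : KObj F) : Prop :=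
  ∀ π : F[X], π.Monic → ∀ hi : Irreducible π, π ∉ Set.range P.p → hc (Qobj π hi.ne_zero) N = 1

theorem Spec.iso {P : Dat k deg F} {M N : KObj F} (h : Spec P M) (e : Iso M N) : Spec P N := by
  intro π hm hi hr
  rw [← e.hc_right, h π hm hi hr]

theorem Spec.D {P : Dat k deg F} {N : KObj F} (h : Spec P N) : Spec P (D N) := by
  intro π hm hi hr
  rw [← hc_bij _ _ (Qobj_bij _ _), h π hm hi hr]

theorem Spec.sub [Finite F] {P : Dat k deg F} {N : KObj F} (h : Spec P N) (A : Sub N) : Spec P A.obj := by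
  intro π hm hi hr
  have h1 := h π hm hi hr
  have h2 : hc (Qobj π hi.ne_zero) A.obj ≤ hc (Qobj π hi.ne_zero) N := by
    refine Nat.card_le_card_of_injective (fun g => A.incl.comp g) ?_
    intro g g' hg
    exact incl_comp_cancel A g g' hg
  have h3 : 0 < hc (Qobj π hi.ne_zero) A.obj := by
    have : Nonempty (KHom (Qobj π hi.ne_zero) A.obj) := ⟨KHom.zero _ _⟩
    exact Nat.card_pos
  omega

noncomputable def S (P : Dat k deg F) : (L : ℕ) → (Fin L → ℕ) → (Fin k × Fin n → ℕ) → KObj F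
  | 0, _, α => Reg F (Xm P α)
  | (L + 1), c, α => Phi (c 0) (S P L (Fin.tail c) α)

theorem S_inj (P : Dat k deg F) (L : ℕ) (c : Fin L → ℕ) (α : Fin k × Fin n → ℕ) :
    Function.Injective (S P L c α).i := by
  induction L with
  | zero => exact Function.injective_id
  | succ L ih => exact Phi_inj _ _ (ih _)

def dV (deg : Fin k → ℕ) (L : ℕ) (c : Fin L → ℕ) (α : Fin k × Fin n → ℕ) : ℕ := ∑ j, c j * ((j : ℕ) + 1) + rk deg α
def dU (deg : Fin k → ℕ) (L : ℕ) (c : Fin L → ℕ) (α : Fin k × Fin n → ℕ) : ℕ := ∑ j, c j * (j : ℕ) + rk deg α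

theorem dV_succ (L : ℕ) (c : Fin (L + 1) → ℕ) (α : Fin k × Fin n → ℕ) :
    dV deg (L + 1) c α + dU deg L (Fin.tail c) α = 2 * dV deg L (Fin.tail c) α + c 0 := by
  simp only [dV, dU, Fin.sum_univ_succ, Fin.tail]
  have : 2 * ∑ x : Fin L, c x.succ * ((x : ℕ) + 1) = ∑ x : Fin L, c x.succ * ((x.succ : ℕ) + 1) + ∑ x : Fin L, c x.succ * (x : ℕ) := by
    rw [← Finset.sum_add_distrib, Finset.mul_sum]
    refine Finset.sum_congr rfl fun x _ => ?_
    simp; ring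
  simp at this ⊢
  omega

theorem dU_succ (L : ℕ) (c : Fin (L + 1) → ℕ) (α : Fin k × Fin n → ℕ) :
    dU deg (L + 1) c α = dV deg L (Fin.tail c) α := by
  simp [dV, dU, Fin.sum_univ_succ, Fin.tail]

theorem S_finrank (P : Dat k deg F) (L : ℕ) (c : Fin L → ℕ) (α : Fin k × Fin n → ℕ) :
    Module.finrank F (S P L c α).V = dV deg L c α ∧ Module.finrank F (S P L c α).U = dU deg L c α := by
  induction L with
  | zero => 
    have := finrank_Xm P α
    constructor
    · simp only [dV, Finset.univ_eq_empty, Finset.sum_empty, zero_add]; exact this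
    · simp only [dU, Finset.univ_eq_empty, Finset.sum_empty, zero_add]; exact this
  | succ L ih =>
    obtain ⟨h1, h2⟩ := ih (Fin.tail c)
    constructor
    · have h3 := finrank_PhiV (c 0) (S P L (Fin.tail c) α) (S_inj _ _ _ _)
      have h4 := dV_succ (deg := deg) L c α
      rw [h1, h2] at h3
      change Module.finrank F (Phi (c 0) (S P L (Fin.tail c) α)).V = _
      omega
    · rw [dU_succ, ← h1]; rfl

theorem hc_bij_S (P : Dat k deg F) (M : KObj F) (hM : Function.Bijective M.i) (L : ℕ) (c : Fin L → ℕ)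
    (α : Fin k × Fin n → ℕ) : hc M (S P L c α) = hc M (Reg F (Xm P α)) := by
  induction L with
  | zero => rfl
  | succ L ih =>
    rw [hc_bij _ _ hM, ← ih (Fin.tail c)]
    exact (D_Phi _ _ (S_inj _ _ _ _)).symm.hc_right _

theorem S_Spec [Finite F] (P : Dat k deg F) (L : ℕ) (c : Fin L → ℕ) (α : Fin k × Fin n → ℕ) : Spec P (S P L c α) := by
  intro π hm hi hr
  rw [hc_bij_S _ _ (Qobj_bij _ _), hc_Qobj, kc_Xm_other P α π hm hi hr]

def eS (deg : Fin k → ℕ) : (L : ℕ) → (Fin L → ℕ) → (Fin k × Fin n → ℕ) → (Fin L → ℕ) → (Fin k × Fin n → ℕ) → ℕ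
  | 0, _, α, _, α' => er deg α α'
  | (L + 1), c, α, c', α' => eS deg L (Fin.tail c) α (Fin.tail c') α' + dV deg (L + 1) c' α' * c 0

theorem hc_S [Finite F] (P : Dat k deg F) (L : ℕ) (c c' : Fin L → ℕ) (α α' : Fin k × Fin n → ℕ) :
    hc (S P L c α) (S P L c' α') = Nat.card F ^ (eS deg L c α c' α') := by
  induction L with
  | zero => exact hc_Xm P α α'
  | succ L ih =>
    have h1 : hc (S P (L + 1) c α) (S P (L + 1) c' α') = _ := hc_Phi (c 0) (S P L (Fin.tail c) α) (S P (L + 1) c' α')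
    rw [h1, Module.natCard_eq_pow_finrank (K := F), (S_finrank P (L + 1) c' α').1, ← pow_mul, eS, pow_add, ← ih]
    congr 1
    exact (D_Phi _ _ (S_inj _ _ _ _)).symm.hc_right _

theorem S_zero (P : Dat k deg F) (L : ℕ) (α : Fin k × Fin n → ℕ) : Iso (Reg F (Xm P α)) (S P L 0 α) := by
  induction L with
  | zero => exact Iso.refl _
  | succ L ih => exact (Phi_zero_of_bij _ (Reg_bij F (Xm P α))).symm.trans (ih.Phi 0)

theorem S_unique [Finite F] (P : Dat k deg F) (L : ℕ) (c c' : Fin L → ℕ) (α α' : Fin k × Fin n → ℕ)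
    (h : Iso (S P L c α) (S P L c' α')) : c = c' ∧ α = α' := by
  induction L with
  | zero =>
    refine ⟨Subsingleton.elim _ _, Xm_unique P α α' ?_⟩
    intro i a
    have hne := pow_ne_zero a (P.irr i).ne_zero
    rw [← hc_Qobj _ hne, ← hc_Qobj _ hne]
    exact h.hc_right _
  | succ L ih =>
    have h1 : Iso (S P L (Fin.tail c) α) (S P L (Fin.tail c') α') :=
      ((D_Phi _ _ (S_inj _ _ _ _)).trans h.D).trans (D_Phi _ _ (S_inj _ _ _ _)).symm
    obtain ⟨h2, rfl⟩ := ih _ _ h1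
    refine ⟨?_, rfl⟩
    have h3 := h.finrankV
    rw [(S_finrank ..).1, (S_finrank ..).1] at h3
    have h4 := dV_succ (deg := deg) L c α
    have h5 := dV_succ (deg := deg) L c' α
    rw [← h2, ← h3] at h5
    rw [← Fin.cons_self_tail c, ← Fin.cons_self_tail c', h2]
    congr 1
    omega

theorem iso_Reg_of_bij (N : KObj F) (h : Function.Bijective N.i) :
    ∃ φ : N.U →ₗ[F] N.U, Iso (Reg F (Module.AEval' φ)) N := by
  obtain ⟨φ, hφ⟩ : ∃ φ : N.U →ₗ[F] N.U, ∀ u, N.i (φ u) = N.t u :=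
    ⟨(LinearEquiv.ofBijective N.i h).symm.toLinearMap ∘ₗ N.t,
      fun u => (LinearEquiv.ofBijective N.i h).apply_symm_apply _⟩
  let o := Module.AEval'.of φ
  refine ⟨φ, ⟨o.symm.toLinearMap, N.i ∘ₗ o.symm.toLinearMap, fun _ => rfl, ?_⟩, ?_, ?_⟩
  · intro u
    obtain ⟨v, rfl⟩ := o.surjective u
    change N.i (o.symm ((Polynomial.X : F[X]) • (Module.AEval'.of φ v))) = N.t (o.symm (o v))
    rw [Module.AEval'.X_smul_of]
    change N.i (o.symm (o (φ v))) = _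
    rw [LinearEquiv.symm_apply_apply, LinearEquiv.symm_apply_apply, hφ]
  · exact o.symm.bijective
  · exact h.comp o.symm.bijective

theorem bij_complete [Finite F] (P : Dat k deg F) (N : KObj F) (h : Function.Bijective N.i)
    (hn : Module.finrank F N.V ≤ n) (hs : Spec P N) : ∃ α : Fin k × Fin n → ℕ, Iso N (Reg F (Xm P α)) := by
  obtain ⟨φ, hφ⟩ := iso_Reg_of_bij N h
  have h1 : Module.finrank F (Module.AEval' φ) ≤ n := by
    have := hφ.finrankV
    change Module.finrank F (Module.AEval' φ) = _ at this
    omega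
  obtain ⟨α, ⟨E⟩⟩ := structure_Xm (n := n) P (Module.AEval' φ) (Module.AEval.isTorsion_of_finiteDimensional F N.U φ) h1 (by
    intro π hm hi hr
    rw [← hc_Qobj _ hi.ne_zero]
    exact (hs.iso hφ.symm) π hm hi hr)
  exact ⟨α, hφ.symm.trans (iso_Reg F _ _ E)⟩

theorem S_complete [Finite F] (P : Dat k deg F) (L : ℕ) (hL : L ≤ n) (N : KObj F) (hN : Function.Injective N.i)
    (hV : Module.finrank F N.V ≤ L) (hs : Spec P N) :
    ∃ (c : Fin L → ℕ) (α : Fin k × Fin n → ℕ), Iso N (S P L c α) := by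
  induction L generalizing N with
  | zero =>
    have hb : Function.Bijective N.i := by
      refine ⟨hN, ?_⟩
      have : Subsingleton N.V := Module.finrank_zero_iff.1 (Nat.le_zero.1 hV)
      intro y
      exact ⟨0, Subsingleton.elim _ _⟩
    obtain ⟨α, h⟩ := bij_complete (n := n) P N hb (by omega) hs
    exact ⟨0, α, h.trans (S_zero P 0 α)⟩
  | succ L ih =>
    by_cases hb : Function.Bijective N.i
    · obtain ⟨α, h⟩ := bij_complete (n := n) P N hb (by omega) hs
      exact ⟨0, α, h.trans (S_zero P _ α)⟩
    · have hlt : Module.finrank F N.U < Module.finrank F N.V := by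
        refine lt_of_le_of_ne (LinearMap.finrank_le_finrank_of_injective hN) ?_
        intro heq
        exact hb ⟨hN, (LinearMap.injective_iff_surjective_of_finrank_eq_finrank heq).1 hN⟩
      obtain ⟨c, α, h⟩ := ih (by omega) (D N) (D_inj N hN) (by change Module.finrank F N.U ≤ L; omega) hs.D
      obtain ⟨c0, h0⟩ := iso_Phi_D N
      exact ⟨Fin.cons c0 c, α, h0.symm.trans (h.Phi c0)⟩

end KObj


open Polynomial

section rat
universe u
variable {ι : Type u} (q : ι → ℕ)

def IsRatl (f : ι → ℚ) : Prop := ∃ A B : ℚ[X], ∀ x, B.eval (q x : ℚ) ≠ 0 ∧ f x = A.eval (q x : ℚ) / B.eval (q x : ℚ)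

variable {q}

theorem IsRatl.add {f g : ι → ℚ} (hf : IsRatl q f) (hg : IsRatl q g) : IsRatl q (fun x => f x + g x) := by
  obtain ⟨A, B, h⟩ := hf
  obtain ⟨A', B', h'⟩ := hg
  refine ⟨A * B' + B * A', B * B', fun x => ?_⟩
  obtain ⟨h1, h2⟩ := h x
  obtain ⟨h3, h4⟩ := h' x
  refine ⟨by simp [h1, h3], ?_⟩
  beta_reduce
  rw [h2, h4, div_add_div _ _ h1 h3]; simp

theorem IsRatl.mul {f g : ι → ℚ} (hf : IsRatl q f) (hg : IsRatl q g) : IsRatl q (fun x => f x * g x) := by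
  obtain ⟨A, B, h⟩ := hf
  obtain ⟨A', B', h'⟩ := hg
  refine ⟨A * A', B * B', fun x => ?_⟩
  obtain ⟨h1, h2⟩ := h x
  obtain ⟨h3, h4⟩ := h' x
  refine ⟨by simp [h1, h3], ?_⟩
  beta_reduce
  rw [h2, h4, div_mul_div_comm]; simp

theorem IsRatl.div {f g : ι → ℚ} (hf : IsRatl q f) (hg : IsRatl q g) (h0 : ∀ x, g x ≠ 0) :
    IsRatl q (fun x => f x / g x) := by
  obtain ⟨A, B, h⟩ := hf
  obtain ⟨A', B', h'⟩ := hg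
  refine ⟨A * B', B * A', fun x => ?_⟩
  obtain ⟨h1, h2⟩ := h x
  obtain ⟨h3, h4⟩ := h' x
  have h5 := h0 x
  rw [h4, div_ne_zero_iff] at h5
  refine ⟨by simp [h1, h5.1], ?_⟩
  beta_reduce
  rw [h2, h4, div_div_div_eq]; simp

theorem IsRatl.poly (A : ℚ[X]) : IsRatl q (fun x => A.eval (q x : ℚ)) := ⟨A, 1, fun x => by simp⟩

theorem IsRatl.sub {f g : ι → ℚ} (hf : IsRatl q f) (hg : IsRatl q g) : IsRatl q (fun x => f x - g x) := by
  have := hf.add ((IsRatl.poly (C (-1))).mul hg)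
  simpa [sub_eq_add_neg] using this

theorem IsRatl.sum {κ : Type} (s : Finset κ) (f : κ → ι → ℚ) (h : ∀ k ∈ s, IsRatl q (f k)) :
    IsRatl q (fun x => ∑ k ∈ s, f k x) := by
  classical
  induction s using Finset.induction_on with
  | empty => simpa using IsRatl.poly (q := q) 0
  | insert a s ha ih =>
    have := (h a (Finset.mem_insert_self _ _)).add (ih fun k hk => h k (Finset.mem_insert_of_mem hk))
    simpa [Finset.sum_insert ha] using this

theorem exists_denom (Q : ℚ[X]) : ∃ N : ℕ, N ≠ 0 ∧ ∀ n : ℕ, ∃ z : ℤ, (N : ℚ) * Q.eval (n : ℚ) = z := by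
  induction Q using Polynomial.induction_on' with
  | add p q hp hq =>
    obtain ⟨N, hN, h⟩ := hp
    obtain ⟨N', hN', h'⟩ := hq
    refine ⟨N * N', mul_ne_zero hN hN', fun n => ?_⟩
    obtain ⟨z, hz⟩ := h n
    obtain ⟨z', hz'⟩ := h' n
    refine ⟨N' * z + N * z', ?_⟩
    push_cast
    rw [← hz, ← hz', eval_add]; ring
  | monomial k a =>
    refine ⟨a.den, a.den_nz, fun n => ⟨a.num * n ^ k, ?_⟩⟩
    rw [eval_monomial, ← mul_assoc]
    push_cast
    rw [mul_comm (a.den : ℚ), Rat.mul_den_eq_num]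

theorem poly_of_ratl (f : ι → ℕ) (h : IsRatl q (fun x => (f x : ℚ))) :
    ∃ P : ℚ[X], ∀ x, (f x : ℚ) = P.eval (q x : ℚ) := by
  obtain ⟨A, B, h⟩ := h
  by_cases hfin : (Set.range q).Finite
  · let s := hfin.toFinset
    refine ⟨Lagrange.interpolate s (fun n : ℕ => (n : ℚ)) (fun n => A.eval (n : ℚ) / B.eval (n : ℚ)), fun x => ?_⟩
    rw [Lagrange.eval_interpolate_at_node (s := s) (v := fun n : ℕ => (n : ℚ)) _ (fun a _ b _ hab => Nat.cast_injective (R := ℚ) hab)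
      (i := q x) (by simp [s])]
    exact (h x).2
  · have hinf : (Set.range q).Infinite := hfin
    obtain ⟨_, x0, rfl⟩ := hinf.nonempty
    have hB : B ≠ 0 := by rintro rfl; exact (h x0).1 (by simp)
    obtain ⟨N, hN, hz⟩ := exists_denom (A / B)
    have hdiv : B * (A / B) + A % B = A := EuclideanDomain.div_add_mod A B
    have hdeg : (A % B).degree < B.degree := EuclideanDomain.mod_lt A hB
    have hval : ∀ x, (f x : ℚ) = (A / B).eval (q x : ℚ) + (A % B).eval (q x : ℚ) / B.eval (q x : ℚ) := by
      intro x
      obtain ⟨h1, h2⟩ := h x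
      beta_reduce at h2
      rw [h2]
      conv_lhs => rw [← hdiv]
      rw [eval_add, eval_mul]
      field_simp
    have hlim := (Polynomial.div_tendsto_atTop_zero_of_degree_lt (A % B) B hdeg)
    have hlim2 : Filter.Tendsto (fun n : ℕ => (N : ℚ) * ((A % B).eval (n : ℚ) / B.eval (n : ℚ))) Filter.atTop (nhds 0) := by
      have := (hlim.comp (tendsto_natCast_atTop_atTop (R := ℚ))).const_mul (N : ℚ)
      simpa using this
    have hev := hlim2.eventually (Metric.ball_mem_nhds (0 : ℚ) one_pos)
    obtain ⟨n0, hn0⟩ := Filter.eventually_atTop.1 hev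
    have hR : A % B = 0 := by
      refine Polynomial.eq_zero_of_infinite_isRoot _ ?_
      have hinf2 : (Set.range q \ {n | n < n0}).Infinite := hinf.sdiff (Set.finite_lt_nat n0)
      refine (hinf2.image (f := fun n : ℕ => (n : ℚ)) (fun a _ b _ hab => Nat.cast_injective (R := ℚ) hab)).mono ?_
      rintro _ ⟨_, ⟨⟨x, rfl⟩, hx⟩, rfl⟩
      simp only [Set.mem_ofPred_eq, not_lt] at hx
      have h1 := hn0 _ hx
      obtain ⟨z, hz⟩ := hz (q x)
      have h2 : (N : ℚ) * ((A % B).eval (q x : ℚ) / B.eval (q x : ℚ)) = ((N * f x - z : ℤ) : ℚ) := by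
        push_cast
        rw [← hz, hval x]; ring
      rw [h2] at h1
      have h3 : (N * f x - z : ℤ) = 0 := by
        have h4 : dist (((N * f x - z : ℤ) : ℚ)) 0 < 1 := h1
        rw [Rat.dist_eq] at h4
        have h5 : |(N * f x - z : ℤ)| < 1 := by
          simp only [Rat.cast_zero, sub_zero] at h4
          exact_mod_cast h4
        exact Int.abs_lt_one_iff.1 h5
      rw [h3, Int.cast_zero, mul_eq_zero, div_eq_zero_iff] at h2
      rcases h2 with h2 | h2 | h2
      · exact absurd (by exact_mod_cast h2) hN
      · exact h2
      · exact absurd h2 (h x).1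
    refine ⟨A / B, fun x => ?_⟩
    rw [hval x, hR]; simp

end rat

namespace KObj

structure Ctx (k : ℕ) (deg : Fin k → ℕ) : Type 1 where
  F : Type
  [fld : Field F]
  [fin : Finite F]
  P : Dat k deg F

attribute [instance] Ctx.fld Ctx.fin

variable {k : ℕ} {deg : Fin k → ℕ}

noncomputable def Ctx.q (x : Ctx k deg) : ℕ := Nat.card x.F

abbrev Ty (deg : Fin k → ℕ) (n : ℕ) : Type :=
  {x : (Fin n → ℕ) × (Fin k × Fin n → ℕ) // dV deg n x.1 x.2 ≤ n}

theorem finite_Ty (hdeg : ∀ i, 0 < deg i) (n : ℕ) : Finite (Ty deg n) := by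
  refine Finite.of_injective (β := (Fin n → Fin (n + 1)) × (Fin k × Fin n → Fin (n + 1)))
    (fun x => (fun j => ⟨x.1.1 j, ?_⟩, fun c => ⟨x.1.2 c, ?_⟩)) ?_
  · have h := x.2
    have h1 := Finset.single_le_sum (f := fun j => x.1.1 j * ((j : ℕ) + 1)) (fun _ _ => Nat.zero_le _) (Finset.mem_univ j)
    have h2 : x.1.1 j ≤ x.1.1 j * ((j : ℕ) + 1) := Nat.le_mul_of_pos_right _ (Nat.succ_pos _)
    unfold dV at h
    beta_reduce at h1
    omega
  · have h := x.2
    have h1 := Finset.single_le_sum (f := fun c => x.1.2 c * (deg c.1 * ((c.2 : ℕ) + 1))) (fun _ _ => Nat.zero_le _) (Finset.mem_univ c)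
    have h2 : x.1.2 c ≤ x.1.2 c * (deg c.1 * ((c.2 : ℕ) + 1)) :=
      Nat.le_mul_of_pos_right _ (Nat.mul_pos (hdeg _) (Nat.succ_pos _))
    unfold dV rk at h
    beta_reduce at h1
    omega
  · intro x y hxy
    simp only [Prod.mk.injEq, funext_iff, Fin.mk.injEq] at hxy
    exact Subtype.ext (Prod.ext (funext hxy.1) (funext hxy.2))

variable {n : ℕ}

noncomputable def St (x : Ctx k deg) (a : Ty deg n) : KObj x.F := S x.P n a.1.1 a.1.2

theorem St_unique (x : Ctx k deg) (a b : Ty deg n) (h : Iso (St x a) (St x b)) : a = b := by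
  have := S_unique x.P n _ _ _ _ h
  exact Subtype.ext (Prod.ext this.1 this.2)

theorem St_complete (x : Ctx k deg) (N : KObj x.F) (hi : Function.Injective N.i) (hV : Module.finrank x.F N.V ≤ n)
    (hs : Spec x.P N) : ∃ a : Ty deg n, Iso N (St x a) := by
  obtain ⟨c, α, h⟩ := S_complete (n := n) x.P n le_rfl N hi hV hs
  refine ⟨⟨(c, α), ?_⟩, h⟩
  change dV deg n c α ≤ n
  rw [← (S_finrank x.P n c α).1, ← h.finrankV]
  exact hV

def sz (a : Ty deg n) : ℕ := dV deg n a.1.1 a.1.2 + dU deg n a.1.1 a.1.2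

theorem St_sz (x : Ctx k deg) (a : Ty deg n) :
    Module.finrank x.F (St x a).V + Module.finrank x.F (St x a).U = sz a := by
  unfold St sz
  rw [(S_finrank ..).1, (S_finrank ..).2]

theorem St_ldu [Fintype (Ty deg n)] (x : Ctx k deg) (M : KObj x.F) (b : Ty deg n) :
    (hc M (St x b) : ℚ) = ∑ c : Ty deg n, (sc M (St x c) : ℚ) * (ic (St x c) (St x b) : ℚ) / (ic (St x c) (St x c) : ℚ) := by
  refine ldu (St x) (St_unique x) b ?_ M
  intro A
  refine St_complete x A.obj ?_ ?_ ((S_Spec _ _ _ _ : Spec x.P (St x b)).sub A)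
  · intro u v huv
    apply Subtype.ext
    apply S_inj x.P n b.1.1 b.1.2
    exact congrArg Subtype.val huv
  · refine le_trans (Submodule.finrank_le A.A0) ?_
    unfold St
    rw [(S_finrank ..).1]
    exact b.2

theorem St_hc_rat (a b : Ty deg n) : IsRatl (Ctx.q (deg := deg)) (fun x => (hc (St x a) (St x b) : ℚ)) := by
  have := IsRatl.poly (q := Ctx.q (deg := deg)) (X ^ (eS deg n a.1.1 a.1.2 b.1.1 b.1.2))
  refine cast ?_ this
  congr 1
  funext x
  unfold St
  rw [hc_S]
  simp [Ctx.q]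

theorem main_rat [Fintype (Ty deg n)] (s : ℕ) : ∀ a : Ty deg n, sz a = s →
    (∀ b : Ty deg n, IsRatl (Ctx.q (deg := deg)) (fun x => (sc (St x b) (St x a) : ℚ))) ∧
    (∀ b : Ty deg n, IsRatl (Ctx.q (deg := deg)) (fun x => (ic (St x a) (St x b) : ℚ))) := by
  classical
  induction s using Nat.strong_induction_on with
  | _ s ih =>
  intro a ha
  have hpos : ∀ (x : Ctx k deg) (c : Ty deg n), (ic (St x c) (St x c) : ℚ) ≠ 0 := by
    intro x c
    exact_mod_cast (ic_self_pos (St x c)).ne'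
  have hsame : ∀ (x : Ctx k deg) (c : Ty deg n), sc (St x c) (St x c) = ic (St x c) (St x c) := by
    intro x c
    rw [ic_self, sc_self]
  have hsc : ∀ b : Ty deg n, IsRatl (Ctx.q (deg := deg)) (fun x => (sc (St x b) (St x a) : ℚ)) := by
    intro b
    have h1 := (St_hc_rat b a).sub (IsRatl.sum (Finset.univ.filter fun c : Ty deg n => sz c < s)
      (fun c x => (sc (St x b) (St x c) : ℚ) * (ic (St x c) (St x a) : ℚ) / (ic (St x c) (St x c) : ℚ)) (by
        intro c hc
        have hc := (Finset.mem_filter.1 hc).2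
        exact (((ih _ hc c rfl).1 b).mul ((ih _ hc c rfl).2 a)).div ((ih _ hc c rfl).2 c) (fun x => hpos x c)))
    refine cast ?_ h1
    congr 1
    funext x
    rw [St_ldu, ← Finset.sum_filter_add_sum_filter_not Finset.univ (fun c : Ty deg n => sz c < s), add_sub_cancel_left]
    rw [Finset.sum_eq_single a]
    · rw [mul_div_assoc, div_self (hpos x a), mul_one]
    · intro c hc hca
      have hc := (Finset.mem_filter.1 hc).2
      have : ic (St x c) (St x a) = 0 := by
        by_contra hne
        refine hca (St_unique x c a (iso_of_ic_ne hne ?_))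
        rw [St_sz, St_sz]; omega
      rw [this]; simp
    · intro h
      exact absurd (Finset.mem_filter.2 ⟨Finset.mem_univ _, by omega⟩) h
  refine ⟨hsc, ?_⟩
  intro b
  have h1 := (St_hc_rat a b).sub (IsRatl.sum (Finset.univ.filter fun c : Ty deg n => sz c < s)
      (fun c x => (sc (St x a) (St x c) : ℚ) * (ic (St x c) (St x b) : ℚ) / (ic (St x c) (St x c) : ℚ)) (by
        intro c hc
        have hc := (Finset.mem_filter.1 hc).2
        exact (((ih _ hc c rfl).1 a).mul ((ih _ hc c rfl).2 b)).div ((ih _ hc c rfl).2 c) (fun x => hpos x c)))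
  refine cast ?_ h1
  congr 1
  funext x
  rw [St_ldu, ← Finset.sum_filter_add_sum_filter_not Finset.univ (fun c : Ty deg n => sz c < s), add_sub_cancel_left]
  rw [Finset.sum_eq_single a]
  · rw [hsame, mul_div_assoc, mul_div_cancel₀ _ (hpos x a)]
  · intro c hc hca
    have hc := (Finset.mem_filter.1 hc).2
    have : sc (St x a) (St x c) = 0 := by
      by_contra hne
      refine hca (St_unique x a c (iso_of_sc_ne hne ?_)).symm
      rw [St_sz, St_sz]; omega
    rw [this]; simp
  · intro h
    exact absurd (Finset.mem_filter.2 ⟨Finset.mem_univ _, by omega⟩) h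

theorem ic_rat (hdeg : ∀ i, 0 < deg i) (a b : Ty deg n) :
    IsRatl (Ctx.q (deg := deg)) (fun x => (ic (St x a) (St x b) : ℚ)) := by
  have := finite_Ty hdeg n
  have := Fintype.ofFinite (Ty deg n)
  exact (main_rat _ a rfl).2 b

end KObj



open Polynomial

namespace KObj
section
variable {F : Type} [Field F]

def snocL (E : Type) [AddCommGroup E] [Module F E] (d : ℕ) : (Fin d → E) →ₗ[F] (Fin (d + 1) → E) where
  toFun u := Fin.snoc (α := fun _ => E) u 0
  map_add' u v := by funext j; refine Fin.lastCases ?_ (fun j => ?_) j <;> simp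
  map_smul' u v := by funext j; refine Fin.lastCases ?_ (fun j => ?_) j <;> simp

def consL (E : Type) [AddCommGroup E] [Module F E] (d : ℕ) : (Fin d → E) →ₗ[F] (Fin (d + 1) → E) where
  toFun u := Fin.cons (α := fun _ => E) 0 u
  map_add' u v := by funext j; refine Fin.cases ?_ (fun j => ?_) j <;> simp
  map_smul' u v := by funext j; refine Fin.cases ?_ (fun j => ?_) j <;> simp

theorem snocL_inj (E : Type) [AddCommGroup E] [Module F E] (d : ℕ) : Function.Injective (snocL (F := F) E d) := by
  intro u v h
  funext j
  have := congrFun h j.castSucc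
  simpa [snocL] using this

variable (F) in
abbrev PO (m d : ℕ) : KObj F where
  V := Fin (d + 1) → (Fin m → F)
  U := Fin d → (Fin m → F)
  i := snocL _ d
  t := consL _ d

theorem PO_D (m d : ℕ) : Iso (PO F m d) (D (PO F m (d + 1))) := by
  refine ⟨⟨LinearMap.codRestrict _ ((snocL (F := F) (Fin m → F) d).prod (consL (F := F) (Fin m → F) d)) ?_, LinearMap.id,
    fun _ => rfl, fun _ => rfl⟩, ⟨?_, ?_⟩, Function.bijective_id⟩
  · intro u
    change Fin.cons (α := fun _ => (Fin m → F)) 0 (Fin.snoc (α := fun _ => (Fin m → F)) u 0) =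
      Fin.snoc (α := fun _ => (Fin m → F)) (Fin.cons (α := fun _ => (Fin m → F)) 0 u) 0
    exact Fin.cons_snoc_eq_snoc_cons _ _ _
  · intro u v h
    exact snocL_inj (F := F) _ d (congrArg (D (PO F m (d + 1))).i h)
  · intro y
    have h := D_rel _ y
    set a : Fin (d + 1) → (Fin m → F) := (D (PO F m (d + 1))).i y with ha
    set b : Fin (d + 1) → (Fin m → F) := (D (PO F m (d + 1))).t y with hb
    change Fin.cons (α := fun _ => (Fin m → F)) 0 a = Fin.snoc (α := fun _ => (Fin m → F)) b 0 at h
    have hb0 : b 0 = 0 := by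
      have := congrFun h 0
      rw [Fin.cons_zero] at this
      rw [this]
      exact (Fin.snoc_castSucc (α := fun _ => (Fin m → F)) 0 b 0).symm
    have hbt : Fin.cons (α := fun _ => (Fin m → F)) 0 (Fin.tail b) = b := by
      rw [← hb0]; exact Fin.cons_self_tail b
    refine ⟨Fin.tail b, D_ext _ _ _ ?_ hbt⟩
    change Fin.snoc (α := fun _ => (Fin m → F)) (Fin.tail b) 0 = a
    rw [← hbt, ← Fin.cons_snoc_eq_snoc_cons] at h
    exact ((Fin.cons_injective2 (α := fun _ => (Fin m → F)) h).2).symm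

theorem PO_inj (m d : ℕ) : Function.Injective (PO F m d).i := snocL_inj _ _

theorem finrank_PO_V (m d : ℕ) : Module.finrank F (PO F m d).V = (d + 1) * m := by
  change Module.finrank F (Fin (d + 1) → (Fin m → F)) = _
  rw [Module.finrank_pi_fintype]; simp

theorem finrank_PO_U (m d : ℕ) : Module.finrank F (PO F m d).U = d * m := by
  change Module.finrank F (Fin d → (Fin m → F)) = _
  rw [Module.finrank_pi_fintype]; simp

theorem iso_zero (M N : KObj F) (h1 : Module.finrank F M.V = 0) (h2 : Module.finrank F M.U = 0)
    (h3 : Module.finrank F N.V = 0) (h4 : Module.finrank F N.U = 0) : Iso M N := by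
  have := Module.finrank_zero_iff.1 h1
  have := Module.finrank_zero_iff.1 h2
  have := Module.finrank_zero_iff.1 h3
  have := Module.finrank_zero_iff.1 h4
  exact ⟨KHom.zero M N, ⟨fun _ _ _ => Subsingleton.elim _ _, fun y => ⟨0, Subsingleton.elim _ _⟩⟩,
    ⟨fun _ _ _ => Subsingleton.elim _ _, fun y => ⟨0, Subsingleton.elim _ _⟩⟩⟩

theorem PO_iso {k n : ℕ} {deg : Fin k → ℕ} (m d L : ℕ) (hL : d < L) :
    ∃ c : Fin L → ℕ, ∀ x : Ctx k deg, Iso (PO x.F m d) (S (n := n) x.P L c 0) := by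
  induction d generalizing L with
  | zero =>
    obtain ⟨L, rfl⟩ : ∃ L', L = L' + 1 := ⟨L - 1, by omega⟩
    refine ⟨Fin.cons m 0, fun x => ?_⟩
    have hrk : rk (n := n) deg 0 = 0 := by simp [rk]
    have h0 : Module.finrank x.F (D (PO x.F m 0)).V = 0 := by
      change Module.finrank x.F (PO x.F m 0).U = 0
      rw [finrank_PO_U]; simp
    have h0' : Module.finrank x.F (D (PO x.F m 0)).U = 0 := by
      have := LinearMap.finrank_le_finrank_of_injective (D_inj _ (PO_inj (F := x.F) m 0))
      omega
    have h1 : Iso (D (PO x.F m 0)) (S (n := n) x.P L 0 0) := by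
      refine iso_zero _ _ h0 h0' ?_ ?_
      · rw [(S_finrank ..).1]; simp [dV, hrk]
      · rw [(S_finrank ..).2]; simp [dU, hrk]
    obtain ⟨c, hc⟩ := iso_Phi_D (PO x.F m 0)
    have h2 := finrank_PhiV c _ (D_inj _ (PO_inj (F := x.F) m 0))
    rw [hc.finrankV, finrank_PO_V, h0, h0'] at h2
    have : c = m := by omega
    subst this
    exact hc.symm.trans (h1.Phi c)
  | succ d ih =>
    obtain ⟨L, rfl⟩ : ∃ L', L = L' + 1 := ⟨L - 1, by omega⟩
    obtain ⟨c, hc⟩ := ih L (by omega)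
    refine ⟨Fin.cons 0 c, fun x => ?_⟩
    have h1 := (PO_D (F := x.F) m d).symm
    obtain ⟨c0, hc0⟩ := iso_Phi_D (PO x.F m (d + 1))
    have h2 := finrank_PhiV c0 _ (D_inj _ (PO_inj (F := x.F) m (d + 1)))
    rw [hc0.finrankV, finrank_PO_V, h1.finrankV, h1.finrankU, finrank_PO_V, finrank_PO_U] at h2
    have : c0 = 0 := by nlinarith
    subst this
    exact hc0.symm.trans ((h1.trans (hc x)).Phi 0)

theorem PO_type {k n : ℕ} {deg : Fin k → ℕ} (m d : ℕ) (hm : 0 < m) (hn : n = m * (d + 1)) :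
    ∃ (a : Ty deg n), ∀ x : Ctx k deg, Iso (PO x.F m d) (St x a) := by
  obtain ⟨c, hc⟩ := PO_iso (k := k) (n := n) (deg := deg) m d n (by nlinarith)
  by_cases hne : Nonempty (Ctx k deg)
  · obtain ⟨x0⟩ := hne
    refine ⟨⟨(c, 0), ?_⟩, hc⟩
    change dV deg n c 0 ≤ n
    rw [← (S_finrank x0.P n c 0).1, ← (hc x0).finrankV, finrank_PO_V, hn, mul_comm]
  · refine ⟨⟨(0, 0), ?_⟩, fun x => absurd ⟨x⟩ hne⟩
    simp [dV, rk]

end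

section count
variable {F : Type} [Field F] {V : Type} [AddCommGroup V] [Module F V] [FiniteDimensional F V]

abbrev RT (T : V →ₗ[F] V) : KObj F where
  V := V
  U := V
  i := LinearMap.id
  t := T

/-- the map built from one copy of `E` -/
def Psi (T : V →ₗ[F] V) {m : ℕ} (d : ℕ) (w : (Fin m → F) →ₗ[F] V) : (Fin d → (Fin m → F)) →ₗ[F] V :=
  ∑ j : Fin d, (T ^ (j : ℕ)) ∘ₗ w ∘ₗ LinearMap.proj j

theorem Psi_apply (T : V →ₗ[F] V) {m d : ℕ} (w : (Fin m → F) →ₗ[F] V) (x : Fin d → (Fin m → F)) :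
    Psi T d w x = ∑ j : Fin d, (T ^ (j : ℕ)) (w (x j)) := by
  simp [Psi, LinearMap.sum_apply]

theorem Psi_shift (T : V →ₗ[F] V) {m d : ℕ} (w : (Fin m → F) →ₗ[F] V) (u : Fin d → (Fin m → F)) :
    Psi T (d + 1) w (consL (F := F) _ d u) = T (Psi T (d + 1) w (snocL (F := F) _ d u)) := by
  rw [Psi_apply, Psi_apply, Fin.sum_univ_succ, Fin.sum_univ_castSucc]
  simp [consL, snocL, pow_succ', map_sum]

theorem single_succ {m d : ℕ} (j : Fin d) (e : Fin m → F) :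
    (Pi.single j.succ e : Fin (d + 1) → (Fin m → F)) = consL (F := F) _ d (Pi.single j e) := by
  funext l
  refine Fin.cases ?_ (fun l => ?_) l
  · simp [consL, Pi.single_apply, (Fin.succ_ne_zero j).symm]
  · simp [consL, Pi.single_apply]

theorem single_castSucc {m d : ℕ} (j : Fin d) (e : Fin m → F) :
    (Pi.single j.castSucc e : Fin (d + 1) → (Fin m → F)) = snocL (F := F) _ d (Pi.single j e) := by
  funext l
  refine Fin.lastCases ?_ (fun l => ?_) l
  · simp [snocL, Pi.single_apply, (Fin.castSucc_lt_last j).ne']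
  · simp [snocL, Pi.single_apply]

theorem Psi_single (T : V →ₗ[F] V) {m d : ℕ} (w : (Fin m → F) →ₗ[F] V) (j : Fin d) (e : Fin m → F) :
    Psi T d w (Pi.single j e) = (T ^ (j : ℕ)) (w e) := by
  rw [Psi_apply, Finset.sum_eq_single j]
  · simp
  · intro b _ hb; simp [Pi.single_eq_of_ne hb]
  · simp

theorem hom_eq_Psi (T : V →ₗ[F] V) {m d : ℕ} (g : KHom (PO F m d) (RT T)) :
    g.f0 = Psi T (d + 1) (g.f0 ∘ₗ LinearMap.single F (fun _ : Fin (d + 1) => (Fin m → F)) 0) := by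
  refine LinearMap.pi_ext fun j e => ?_
  rw [Psi_single]
  simp only [LinearMap.comp_apply, LinearMap.coe_single]
  induction j using Fin.induction with
  | zero => simp
  | succ j ih =>
    have h1 := g.ht (Pi.single j e)
    have h2 := g.hi (Pi.single j e)
    change g.f0 (consL (F := F) _ d _) = T (g.f1 _) at h1
    change g.f0 (snocL (F := F) _ d _) = g.f1 _ at h2
    rw [← single_succ, ← h2, ← single_castSucc, ih] at h1
    rw [h1]
    simp [pow_succ']

noncomputable def injEquiv (T : V →ₗ[F] V) (m d : ℕ) : {g : KHom (PO F m d) (RT T) // g.Inj} ≃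
    {w : (Fin m → F) →ₗ[F] V // Function.Injective (Psi T (d + 1) w)} where
  toFun g := ⟨g.1.f0 ∘ₗ LinearMap.single F (fun _ : Fin (d + 1) => (Fin m → F)) 0, by
    rw [← hom_eq_Psi]; exact g.2.2⟩
  invFun w := ⟨⟨Psi T (d + 1) w.1 ∘ₗ snocL _ d, Psi T (d + 1) w.1, fun _ => rfl, fun u => Psi_shift T w.1 u⟩,
    w.2.comp (snocL_inj _ d), w.2⟩
  left_inv g := by
    apply Subtype.ext
    refine KHom.ext ?_ (hom_eq_Psi T g.1).symm
    apply LinearMap.ext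
    intro u
    change Psi T (d + 1) _ (snocL (F := F) _ d u) = _
    rw [← hom_eq_Psi]
    exact g.1.hi u
  right_inv w := by
    apply Subtype.ext
    apply LinearMap.ext
    intro e
    change Psi T (d + 1) w.1 (Pi.single 0 e) = _
    rw [Psi_single]; simp

theorem range_Psi (T : V →ₗ[F] V) {m d : ℕ} (w : (Fin m → F) →ₗ[F] V) :
    LinearMap.range (Psi T d w) = ⨆ i : Fin d, (LinearMap.range w).map (T ^ (i : ℕ)) := by
  apply le_antisymm
  · rintro _ ⟨x, rfl⟩
    rw [Psi_apply]
    refine Submodule.sum_mem _ fun j _ => ?_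
    exact Submodule.mem_iSup_of_mem j ⟨w (x j), ⟨_, rfl⟩, rfl⟩
  · refine iSup_le fun j => ?_
    rintro _ ⟨_, ⟨e, rfl⟩, rfl⟩
    exact ⟨Pi.single j e, Psi_single T w j e⟩

theorem Psi_inj_iff (T : V →ₗ[F] V) {m d : ℕ} (hd : 0 < d) (hV : Module.finrank F V = m * d) (w : (Fin m → F) →ₗ[F] V) :
    Function.Injective (Psi T d w) ↔ Function.Injective w ∧ IsSplittingSubspace T m d (LinearMap.range w) := by
  have hdim : Module.finrank F (Fin d → (Fin m → F)) = Module.finrank F V := by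
    rw [Module.finrank_pi_fintype, hV]; simp [mul_comm]
  constructor
  · intro h
    have hw : Function.Injective w := by
      intro e e' hee
      have := h (a₁ := Pi.single ⟨0, hd⟩ e) (a₂ := Pi.single ⟨0, hd⟩ e') (by rw [Psi_single, Psi_single, hee])
      exact Pi.single_injective _ this
    refine ⟨hw, ?_, ?_, ?_⟩
    · rw [LinearMap.finrank_range_of_inj hw]; simp
    · classical
      rw [iSupIndep_iff_finsetSum_eq_zero_imp_eq_zero]
      intro s v hv hsum
      have hv' : ∀ i : Fin d, ∃ e : Fin m → F, i ∈ s → (T ^ (i : ℕ)) (w e) = v i := by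
        intro i
        by_cases hi : i ∈ s
        · obtain ⟨_, ⟨e, rfl⟩, he⟩ := hv i hi
          exact ⟨e, fun _ => he⟩
        · exact ⟨0, fun h => absurd h hi⟩
      choose e he using hv'
      have h0 : Psi T d w (fun i => if i ∈ s then e i else 0) = 0 := by
        rw [Psi_apply, ← hsum, ← Finset.sum_subset (Finset.subset_univ s)]
        · refine Finset.sum_congr rfl fun i hi => ?_
          rw [if_pos hi, he i hi]
        · intro i _ hi
          rw [if_neg hi]; simp
      have h1 := h (h0.trans (map_zero _).symm)
      intro i hi
      have h2 := congrFun h1 i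
      simp only [if_pos hi, Pi.zero_apply] at h2
      rw [← he i hi, h2]; simp
    · rw [← range_Psi, LinearMap.range_eq_top]
      exact (LinearMap.injective_iff_surjective_of_finrank_eq_finrank hdim).1 h
  · rintro ⟨_, _, _, h⟩
    rw [← range_Psi, LinearMap.range_eq_top] at h
    exact (LinearMap.injective_iff_surjective_of_finrank_eq_finrank hdim).2 h

noncomputable def fibEquiv {m : ℕ} (W : Submodule F V) (hW : Module.finrank F W = m) :
    {w : (Fin m → F) →ₗ[F] V // Function.Injective w ∧ LinearMap.range w = W} ≃ ((Fin m → F) ≃ₗ[F] (Fin m → F)) :=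
  let e : W ≃ₗ[F] (Fin m → F) := LinearEquiv.ofFinrankEq W (Fin m → F) (by simp [hW])
  { toFun := fun w => ((LinearEquiv.ofInjective w.1 w.2.1).trans (LinearEquiv.ofEq _ _ w.2.2)).trans e
    invFun := fun f => ⟨W.subtype ∘ₗ (f.trans e.symm).toLinearMap, 
      Subtype.val_injective.comp (f.trans e.symm).injective, by
        rw [LinearMap.range_comp, LinearEquiv.range, Submodule.map_top, Submodule.range_subtype]⟩
    left_inv := by
      intro w
      apply Subtype.ext
      apply LinearMap.ext
      intro x
      simp
    right_inv := by
      intro f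
      apply LinearEquiv.ext
      intro x
      simp only [LinearEquiv.trans_apply]
      rw [← LinearEquiv.eq_symm_apply]
      apply Subtype.ext
      simp }

theorem card_inj [Finite F] (T : V →ₗ[F] V) (m d : ℕ) (hV : Module.finrank F V = m * (d + 1)) :
    ic (PO F m d) (RT T) = splitCount T m (d + 1) * ∏ i : Fin m, (Nat.card F ^ m - Nat.card F ^ (i : ℕ)) := by
  classical
  haveI := Fintype.ofFinite F
  have hGL : Nat.card ((Fin m → F) ≃ₗ[F] (Fin m → F)) = ∏ i : Fin m, (Nat.card F ^ m - Nat.card F ^ (i : ℕ)) := by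
    rw [Nat.card_eq_fintype_card (α := F), ← Matrix.card_GL_field,
      Nat.card_congr (Matrix.GeneralLinearGroup.toLin (n := Fin m) (R := F)).toEquiv,
      Nat.card_congr (LinearMap.GeneralLinearGroup.generalLinearEquiv F (Fin m → F)).toEquiv]
  rw [ic, Nat.card_congr (injEquiv T m d), ← hGL]
  let SW := {W : Submodule F V // IsSplittingSubspace T m (d + 1) W}
  let E : {w : (Fin m → F) →ₗ[F] V // Function.Injective (Psi T (d + 1) w)} ≃
      SW × ((Fin m → F) ≃ₗ[F] (Fin m → F)) :=
    calc {w : (Fin m → F) →ₗ[F] V // Function.Injective (Psi T (d + 1) w)}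
      _ ≃ Σ W : SW, {w : (Fin m → F) →ₗ[F] V // Function.Injective w ∧ LinearMap.range w = W.1} :=
        { toFun := fun w => ⟨⟨LinearMap.range w.1, ((Psi_inj_iff T (Nat.succ_pos d) hV w.1).1 w.2).2⟩,
            ⟨w.1, ((Psi_inj_iff T (Nat.succ_pos d) hV w.1).1 w.2).1, rfl⟩⟩
          invFun := fun z => ⟨z.2.1, (Psi_inj_iff T (Nat.succ_pos d) hV z.2.1).2 ⟨z.2.2.1, by rw [z.2.2.2]; exact z.1.2⟩⟩
          left_inv := fun _ => rfl
          right_inv := by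
            rintro ⟨⟨W, hW⟩, ⟨w, hw, hr⟩⟩
            change LinearMap.range w = W at hr
            subst hr
            rfl }
      _ ≃ Σ _ : SW, ((Fin m → F) ≃ₗ[F] (Fin m → F)) := Equiv.sigmaCongrRight fun W => fibEquiv W.1 W.2.1
      _ ≃ SW × ((Fin m → F) ≃ₗ[F] (Fin m → F)) := Equiv.sigmaEquivProd _ _
  rw [Nat.card_congr E, Nat.card_prod]
  rfl

end count

end KObj

namespace KObj

theorem perm_lift {A B : Type*} (f : A → B) {t s : List B} (h : t.Perm s) :
    ∀ l : List A, l.map f = s → ∃ l' : List A, l'.Perm l ∧ l'.map f = t := by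
  induction h with
  | nil => intro l hl; exact ⟨l, List.Perm.refl _, hl⟩
  | cons x h ih =>
    intro l hl
    cases l with
    | nil => simp at hl
    | cons a l =>
      simp only [List.map_cons, List.cons.injEq] at hl
      obtain ⟨l', h1, h2⟩ := ih l hl.2
      exact ⟨a :: l', h1.cons a, by simp [h2, hl.1]⟩
  | swap x y r =>
    intro l hl
    match l, hl with
    | a :: b :: l, hl =>
      simp only [List.map_cons, List.cons.injEq] at hl
      exact ⟨b :: a :: l, List.Perm.swap _ _ _, by simp [hl]⟩
  | trans h1 h2 ih1 ih2 =>
    intro l hl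
    obtain ⟨l', h3, h4⟩ := ih2 l hl
    obtain ⟨l'', h5, h6⟩ := ih1 l' h4
    exact ⟨l'', h5.trans h3, h6⟩

section fin
variable {F : Type} [Field F] {V : Type} [AddCommGroup V] [Module F V] [FiniteDimensional F V]

theorem RT_iso (T : V →ₗ[F] V) : Iso (Reg F (Module.AEval' T)) (RT T) := by
  let o := Module.AEval'.of T
  refine ⟨⟨o.symm.toLinearMap, o.symm.toLinearMap, fun _ => rfl, ?_⟩, ?_, ?_⟩
  · intro u
    obtain ⟨v, rfl⟩ := o.surjective u
    change o.symm ((Polynomial.X : F[X]) • (Module.AEval'.of T v)) = T (o.symm (o v))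
    rw [Module.AEval'.X_smul_of]
    change o.symm (o (T v)) = _
    rw [LinearEquiv.symm_apply_apply, LinearEquiv.symm_apply_apply]
  · exact o.symm.bijective
  · exact o.symm.bijective

theorem hc_RT (T : V →ₗ[F] V) (f : F[X]) (hf : f ≠ 0) :
    hc (Qobj f hf) (RT T) = Nat.card (LinearMap.ker (aeval T f)) := by
  rw [← (RT_iso T).hc_right, hc_Qobj, kc]
  refine Nat.card_congr (((Module.AEval'.of T).symm.toEquiv).subtypeEquiv ?_)
  intro a
  obtain ⟨v, rfl⟩ := (Module.AEval'.of T).surjective a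
  rw [LinearMap.mem_ker]
  have h : f • Module.AEval'.of T v = Module.AEval'.of T (aeval T f v) := (Module.AEval.of_aeval_smul (R := F) (A := Module.End F V) (M := V) (a := T) f v).symm
  rw [h]
  simp

theorem type_data [Finite F] (τ : Multiset (ℕ × Multiset ℕ)) (T : V →ₗ[F] V) (hT : HasType τ T)
    (n : ℕ) (hV : Module.finrank F V = n) :
    ∃ P : Dat τ.toList.length (fun i => (τ.toList.get i).1) F,
    ∃ α : Fin τ.toList.length × Fin n → ℕ, Iso (RT T) (Reg F (Xm P α)) ∧
      rk (fun i => (τ.toList.get i).1) α = n ∧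
      ∀ i a, kd (fun i => (τ.toList.get i).1) i a α =
        (τ.toList.get i).1 * (((τ.toList.get i).2).map (fun b => min b a)).sum := by
  obtain ⟨s, lam, h1, h2, h3, h4, h5⟩ := hT
  have hp : τ.toList.Perm (s.toList.map (fun p => (p.natDegree, lam p))) := by
    rw [← Multiset.coe_eq_coe, Multiset.coe_toList, ← Multiset.map_coe, Finset.coe_toList, h3]
  obtain ⟨l, hl, hm⟩ := perm_lift _ hp _ rfl
  have hnd : l.Nodup := hl.nodup_iff.2 s.nodup_toList
  have hlen : τ.toList.length = l.length := by rw [← hm, List.length_map]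
  have hget : ∀ i : Fin τ.toList.length, τ.toList.get i =
      ((l.get (Fin.cast hlen i)).natDegree, lam (l.get (Fin.cast hlen i))) := by
    intro i
    simp only [List.get_eq_getElem, Fin.val_cast]
    simp only [← hm, List.getElem_map]
  have hmem : ∀ j, l.get j ∈ s := fun j => by
    rw [← Finset.mem_toList, ← hl.mem_iff]; exact List.get_mem _ _
  let P : Dat τ.toList.length (fun i => (τ.toList.get i).1) F :=
    { p := fun i => l.get (Fin.cast hlen i)
      inj := fun i j h => by
        have := (List.nodup_iff_injective_get.1 hnd) h
        exact Fin.cast_injective _ this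
      monic := fun i => (h1 _ (hmem _)).1
      irr := fun i => (h1 _ (hmem _)).2
      hdeg := fun i => by rw [hget] }
  have hPp : ∀ i, τ.toList.get i = ((P.p i).natDegree, lam (P.p i)) := hget
  have hs : Spec P (RT T) := by
    intro π hmo hi hr
    rw [hc_RT, h5 π hmo hi]
    · simp
    · intro hπ
      apply hr
      rw [← Finset.mem_toList, ← hl.mem_iff] at hπ
      obtain ⟨j, hj⟩ := List.get_of_mem hπ
      exact ⟨Fin.cast hlen.symm j, hj⟩
  obtain ⟨α, e⟩ := bij_complete (n := n) P (RT T) Function.bijective_id (by change Module.finrank F V ≤ n; omega) hs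
  refine ⟨P, α, e, ?_, ?_⟩
  · rw [← finrank_Xm P]
    exact e.finrankV.symm.trans hV
  · intro i a
    have hf : P.p i ^ a ≠ 0 := pow_ne_zero _ (P.irr i).ne_zero
    have key := e.hc_right (Qobj (P.p i ^ a) hf)
    rw [hc_RT, hc_Qobj, kc_Xm, Module.natCard_eq_pow_finrank (K := F), h4 _ (hmem _)] at key
    have := Nat.pow_right_injective (Finite.one_lt_card (α := F)) key
    rw [← this, hPp]

end fin

structure Rec {k : ℕ} {deg : Fin k → ℕ} {n : ℕ} (a b : Ty deg n) (m : ℕ) : Type 1 where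
  x : Ctx k deg
  f : ℕ
  h : ic (St x a) (St x b) = f * ∏ i : Fin m, (Nat.card x.F ^ m - Nat.card x.F ^ (i : ℕ))

theorem Rec_poly {k : ℕ} {deg : Fin k → ℕ} {n : ℕ} (hdeg : ∀ i, 0 < deg i) (a b : Ty deg n) (m : ℕ) :
    ∃ Q : ℚ[X], ∀ z : Rec a b m, (z.f : ℚ) = Q.eval (z.x.q : ℚ) := by
  refine poly_of_ratl (q := fun z : Rec a b m => z.x.q) (fun z => z.f) ?_
  obtain ⟨A, B, h⟩ := ic_rat hdeg a b
  have h1 : IsRatl (fun z : Rec a b m => z.x.q) (fun z => (ic (St z.x a) (St z.x b) : ℚ)) :=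
    ⟨A, B, fun z => h z.x⟩
  have h2 : IsRatl (fun z : Rec a b m => z.x.q)
      (fun z => (∏ i : Fin m, ((Polynomial.X : ℚ[X]) ^ m - Polynomial.X ^ (i : ℕ))).eval (z.x.q : ℚ)) := IsRatl.poly _
  have hne : ∀ z : Rec a b m, (∏ i : Fin m, ((Polynomial.X : ℚ[X]) ^ m - Polynomial.X ^ (i : ℕ))).eval (z.x.q : ℚ) ≠ 0 := by
    intro z
    rw [Polynomial.eval_prod]
    refine Finset.prod_ne_zero_iff.2 fun i _ => ?_
    have h3 : 1 < z.x.q := Finite.one_lt_card (α := z.x.F)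
    have h4 : z.x.q ^ (i : ℕ) < z.x.q ^ m := Nat.pow_lt_pow_right h3 i.2
    have h5 : (z.x.q : ℚ) ^ (i : ℕ) < (z.x.q : ℚ) ^ m := by exact_mod_cast h4
    simp only [eval_sub, eval_pow, eval_X]
    exact (sub_pos.2 h5).ne'
  have h3 := h1.div h2 hne
  convert h3 using 2 with z
  rw [eq_div_iff (hne z), z.h, Polynomial.eval_prod]
  push_cast
  congr 1
  refine Finset.prod_congr rfl fun i _ => ?_
  have h3 : 1 < Nat.card z.x.F := Finite.one_lt_card (α := z.x.F)
  have h4 : Nat.card z.x.F ^ (i : ℕ) ≤ Nat.card z.x.F ^ m := (Nat.pow_lt_pow_right h3 i.2).le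
  rw [Nat.cast_sub h4]
  simp [Ctx.q]

end KObj

/-- for fixed `m`, `d` and a fixed similarity class type `τ` of size `md`,
there is a polynomial `P` such that for every finite field `F_q` and every operator `T`
of type `τ` on an `md`-dimensional `F_q`-vector space, `σ(m,d;T) = P(q)`. -/
theorem splitCount_polynomial (m d : ℕ) (hm : 0 < m) (hd : 0 < d)
    (τ : Multiset (ℕ × Multiset ℕ))
    (hsize : (τ.map fun x => x.1 * x.2.sum).sum = m * d) :
    ∃ P : Polynomial ℚ,
      ∀ (F : Type) (_ : Field F) (_ : Fintype F)
        (V : Type) (_ : AddCommGroup V) (_ : Module F V) (_ : FiniteDimensional F V)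
        (_ : Module.finrank F V = m * d)
        (T : V →ₗ[F] V), HasType τ T →
          (splitCount T m d : ℚ) = P.eval (Fintype.card F : ℚ) := by
  classical
  by_cases hex : ∃ (F : Type) (_ : Field F) (_ : Fintype F)
        (V : Type) (_ : AddCommGroup V) (_ : Module F V) (_ : FiniteDimensional F V)
        (_ : Module.finrank F V = m * d)
        (T : V →ₗ[F] V), HasType τ T
  · obtain ⟨F₀, i1, i2, V₀, i3, i4, i5, hV₀, T₀, hT₀⟩ := hex
    obtain ⟨P₀, α₀, -, hr₀, hk₀⟩ := KObj.type_data τ T₀ hT₀ (m * d) hV₀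
    have hdeg := KObj.Dat_pos P₀
    obtain ⟨d, rfl⟩ : ∃ d', d = d' + 1 := ⟨d - 1, by omega⟩
    obtain ⟨a, ha⟩ := KObj.PO_type (deg := fun i => (τ.toList.get i).1) (n := m * (d + 1)) m d hm rfl
    let b : KObj.Ty (fun i => (τ.toList.get i).1) (m * (d + 1)) := ⟨(0, α₀), by
      unfold KObj.dV
      rw [hr₀]
      simp⟩
    obtain ⟨Q, hQ⟩ := KObj.Rec_poly hdeg a b m
    refine ⟨Q, ?_⟩
    intro F _ _ V _ _ _ hV T hT
    obtain ⟨P, α, e, -, hk⟩ := KObj.type_data τ T hT (m * (d + 1)) hV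
    obtain rfl : α = α₀ := KObj.kd_unique P α α₀ (fun i a => (hk i a).trans (hk₀ i a).symm)
    let x : KObj.Ctx τ.toList.length (fun i => (τ.toList.get i).1) := ⟨F, P⟩
    have e2 : KObj.Iso (KObj.RT T) (KObj.St x b) := e.trans (KObj.S_zero P (m * (d + 1)) α)
    have h1 := KObj.card_inj T m d hV
    have h2 : KObj.ic (KObj.St x a) (KObj.St x b) = KObj.ic (KObj.PO F m d) (KObj.RT T) :=
      ((ha x).ic_left _).symm.trans (e2.ic_right _).symm
    have := hQ ⟨x, splitCount T m (d + 1), h2.trans h1⟩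
    rw [← Nat.card_eq_fintype_card]
    exact this
  · refine ⟨0, ?_⟩
    intro F i1 i2 V i3 i4 i5 hV T hT
    exact absurd ⟨F, i1, i2, V, i3, i4, i5, hV, T, hT⟩ hex
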